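/- Let R be a standard graded domain of dimension d ≥ 2 over an algebraically closed field k of characteristic 0, let I ⊂ R be a homogeneous ideal of finite colength, and let (A, R_A, I_A) be a spread of (R, I) with generic point s_0 of Spec(A). Then for any fixed m ≥ d−1, lim_{s → s_0} [ ℓ(R_s/I_s^{[p^m]}) / p^{md} − e_{HK}(R_s, I_s) ] = 0, where p = char k(s) and the limit is over closed points s of a suitable open dense subset of Spec(A). -/

import Mathlib

/-!
The normalized colengths `ℓ(R_s/I_s^{[p^m]})/p^{md}` approximate their limit with an error at most
`C/p`, where `C` is independent of the closed point `s` in a dense open subset of `Spec A`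
(`SpreadHK.exists_bound`).  Since `p` is larger than any given bound outside a proper closed subset,
this gives the theorem.

*A single fiber.*  Let `κ` be a perfect field of characteristic `p`, and let `R` be finite over a
polynomial ring `P = κ[X₁, …, Xₙ]`, free after inverting `c ∈ P`, with trace form of discriminant
`D ≠ 0` (`SpreadHK.NData`).  For `Q = p^e` consider the map `(m_α) ↦ ∑ m_α^Q x^α` from `R^{Q^n}` to
`R`, where `α` runs through the exponent vectors with entries `< Q`.  The trace is compatible with
Frobenius, so the discriminant controls the determinant of the matrix expressing `Q`-th powers of a
basis in that basis (`NData.det_w_sq`).  Consequently the kernel of the map is killed by `c` and the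
image contains `E^Q R` for an element `E` of `P` that depends on `c` and `D` but not on `Q`
(`NData.c_mul_eq_zero_of_sum`, `NData.exists_sum_eq`).  Reducing modulo `J^{[Q]}` with `J = I^{[q]}`
compares `ℓ(R/I^{[qQ]})` with `Q^n ℓ(R/I^{[q]})`, up to a multiple of
`Q^n ℓ(R/(I^{[q]} + cE))` (`colength_frobenius_ge`, `colength_frobenius_le`).

If every `x_i` is a root modulo `I` of a polynomial of degree at most `d`, then counting monomials
bounds `ℓ(R/(I^{[q]} + cE))` by a constant times `q^{n-1}`, where the constant involves only `d`, the
degree of `cE` and the number of generators of `R` over `P`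
(`NData.finrank_frobeniusPower_sup_le`).  So `ℓ(R/I^{[q]})/q^n` is a Cauchy sequence with uniform
rate `C/q` (`NData.hk_compare`, `NData.abs_sub_le`).  The normalization in the statement uses an
exponent `d` not assumed equal to `n`; as `cE ∉ I^j` for some `j`, the colengths grow exactly like
`q^n`, and the other two cases are dealt with directly (`abs_sub_le_of_uniform`).

*Spreading out.*  Noether normalization of the generic fiber of `R_A`, together with a basis of the
extension of fraction fields, which is separable in characteristic zero, provides such data over a
localization of `A` (`exists_spread`).  All of it is stable under base change to the fibers where a
nonzero element of `A` does not vanish (`NData.baseChange`, `fiberEquiv`).  That `cE ∉ I^j` for a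
fixed `j` spreads out as well, by Krull's intersection theorem and generic freeness
(`exists_notMem_pow`).  If some element of `R_A` were transcendental modulo `I_A`, then almost all
fibers of `R_A/I_A` would be infinite-dimensional, every `finrank` would vanish, and the estimate
would hold trivially (`exists_not_finite`).
-/

/-!
Statement 2 (Theorem 1.1(3)): let `R` be a standard graded domain of dimension
`d ≥ 2` over an algebraically closed field `k` of characteristic `0`, `I ⊂ R` a
homogeneous ideal of finite colength, and `(A, R_A, I_A)` a spread of `(R, I)`
with generic point `s₀` of `Spec A`.  Then for any fixed `m ≥ d − 1`,
`lim_{s→s₀} [ℓ(R_s/I_s^{[pᵐ]})/p^{md} − e_HK(R_s, I_s)] = 0`, where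
`p = char k(s)` and the limit is over closed points `s` of a suitable dense
open subset of `Spec A`: for every `ε > 0` there is a nonzero `g ∈ A` such
that the quantity has absolute value `< ε` at every closed point of the basic
open set `D(g)`.
-/

open Filter

/-- The Frobenius power `I^{[q]}`: the ideal generated by `q`-th powers of
elements of `I`. -/
def Ideal.frobeniusPower {R : Type*} [CommRing R] (I : Ideal R) (q : ℕ) : Ideal R :=
  Ideal.span ((fun x => x ^ q) '' (I : Set R))

/-- The colength `ℓ(R_s / I_s^{[q]})` of the `q`-th Frobenius power of the
fiber ideal `I_s` in the fiber `R_s = S ⊗_A \bar{k(s)}` over the closed point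
`𝔪` of `Spec A`, measured as a `\bar{k(s)}`-vector space dimension. -/
noncomputable def spreadFiberColength {A R : Type*} [CommRing A] [CommRing R]
    [Algebra A R] (S : Subalgebra A R) (I_A : Ideal S)
    (𝔪 : Ideal A) (h𝔪 : 𝔪.IsMaximal) (q : ℕ) : ℕ :=
  letI := h𝔪
  letI : Field (A ⧸ 𝔪) := Ideal.Quotient.field 𝔪
  Module.finrank (AlgebraicClosure (A ⧸ 𝔪))
    ((TensorProduct A (AlgebraicClosure (A ⧸ 𝔪)) S) ⧸
      ((I_A.map (Algebra.TensorProduct.includeRight.toRingHom :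
          S →+* TensorProduct A (AlgebraicClosure (A ⧸ 𝔪)) S)).frobeniusPower q))

namespace SpreadHK

/-! ### Frobenius powers and the length comparison -/

section FrobeniusPower

variable {R : Type*} [CommRing R]

lemma frobeniusPower_eq_map (p e : ℕ) [ExpChar R p] (J : Ideal R) :
    J.frobeniusPower (p ^ e) = J.map (iterateFrobenius R p e) := rfl

lemma frobeniusPower_frobeniusPower (p e f : ℕ) [ExpChar R p] (J : Ideal R) :
    (J.frobeniusPower (p ^ e)).frobeniusPower (p ^ f) = J.frobeniusPower (p ^ (f + e)) := by
  rw [frobeniusPower_eq_map, frobeniusPower_eq_map, frobeniusPower_eq_map, Ideal.map_map]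
  congr 1
  ext x
  simp [iterateFrobenius_def, ← pow_mul, pow_add, mul_comm]

lemma pow_mem_frobeniusPower {J : Ideal R} {x : R} (hx : x ∈ J) (q : ℕ) :
    x ^ q ∈ J.frobeniusPower q :=
  Ideal.subset_span ⟨x, hx, rfl⟩

lemma frobeniusPower_le_pow (J : Ideal R) (q : ℕ) : J.frobeniusPower q ≤ J ^ q := by
  refine Ideal.span_le.2 ?_
  rintro _ ⟨x, hx, rfl⟩
  exact Ideal.pow_mem_pow hx q

lemma frobeniusPower_le_self (J : Ideal R) {q : ℕ} (hq : q ≠ 0) : J.frobeniusPower q ≤ J :=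
  (frobeniusPower_le_pow J q).trans (Ideal.pow_le_self hq)

lemma frobeniusPower_map_equiv {R' : Type*} [CommRing R'] (f : R ≃+* R') (J : Ideal R) (q : ℕ) :
    (J.frobeniusPower q).map (f : R →+* R') = (J.map (f : R →+* R')).frobeniusPower q := by
  unfold Ideal.frobeniusPower
  rw [Ideal.map_span]
  congr 1
  ext y
  constructor
  · rintro ⟨_, ⟨x, hx, rfl⟩, rfl⟩
    exact ⟨f x, Ideal.mem_map_of_mem _ hx, by simp⟩
  · rintro ⟨z, hz, rfl⟩
    obtain ⟨x, hx, rfl⟩ := (Ideal.mem_map_of_equiv f z).1 hz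
    exact ⟨x ^ q, ⟨x, hx, rfl⟩, by simp⟩

end FrobeniusPower

/-- The `κ`-vector space `V` with scalars acting through the endomorphism `σ` of `κ`. -/
def Twist {κ : Type*} [Field κ] (_σ : κ →+* κ) (V : Type*) : Type _ := V

section Twist

variable {κ : Type*} [Field κ] (σ : κ →+* κ) (V : Type*) [AddCommGroup V] [Module κ V]

instance : AddCommGroup (Twist σ V) := inferInstanceAs (AddCommGroup V)

instance : Module κ (Twist σ V) := Module.compHom V σ

variable {V} in
lemma twist_smul (t : κ) (v : V) : (t • (show Twist σ V from v)) = (show Twist σ V from σ t • v) :=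
  rfl

lemma rank_twist (hσ : Function.Bijective σ) :
    Module.rank κ (Twist σ V) = Module.rank κ V :=
  rank_eq_of_equiv_equiv σ (AddEquiv.refl V) hσ (fun _ _ => rfl)

lemma finrank_twist (hσ : Function.Bijective σ) :
    Module.finrank κ (Twist σ V) = Module.finrank κ V := by
  unfold Module.finrank
  rw [rank_twist σ V hσ]

lemma finite_twist (hσ : Function.Bijective σ) [Module.Finite κ V] :
    Module.Finite κ (Twist σ V) := by
  rw [← Module.rank_lt_aleph0_iff, rank_twist σ V hσ]
  exact Module.rank_lt_aleph0 κ V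

end Twist

section LengthComparison

variable {κ R : Type*} [Field κ] [CommRing R] [Algebra κ R] (p e : ℕ) [ExpChar κ p] [ExpChar R p]
  (J : Ideal R)

/-- The map `R/J → R/J^{[Q]}` induced by the iterated Frobenius `x ↦ x ^ Q`, `Q = p ^ e`. -/
noncomputable def frobQuot : R ⧸ J →+* R ⧸ J.frobeniusPower (p ^ e) :=
  Ideal.quotientMap _ (iterateFrobenius R p e)
    (Ideal.map_le_iff_le_comap.1 (frobeniusPower_eq_map p e J).ge)

@[simp] lemma frobQuot_mk (x : R) :
    frobQuot p e J (Ideal.Quotient.mk J x) = Ideal.Quotient.mk _ (x ^ p ^ e) := by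
  simp [frobQuot, iterateFrobenius_def]

lemma frobQuot_smul (t : κ) (v : R ⧸ J) :
    frobQuot p e J (t • v) = (iterateFrobenius κ p e t) • frobQuot p e J v := by
  obtain ⟨x, rfl⟩ := Ideal.Quotient.mk_surjective v
  rw [← Ideal.Quotient.mkₐ_eq_mk κ, ← map_smul, Ideal.Quotient.mkₐ_eq_mk, frobQuot_mk,
    frobQuot_mk, smul_pow, iterateFrobenius_def, ← Ideal.Quotient.mkₐ_eq_mk κ, map_smul]

variable {ι : Type*} [Fintype ι] (X : ι → R)

/-- The `κ`-linear map `(v_i) ↦ ∑ v_i ^ Q * X i` from a power of `R/J` to `R/J^{[Q]}`, the latter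
with scalars twisted by Frobenius. -/
noncomputable def frobSum :
    (ι → R ⧸ J) →ₗ[κ] Twist (iterateFrobenius κ p e) (R ⧸ J.frobeniusPower (p ^ e)) where
  toFun v := (∑ i, frobQuot p e J (v i) * Ideal.Quotient.mk _ (X i) :
    R ⧸ J.frobeniusPower (p ^ e))
  map_add' v w := by
    change (∑ i, frobQuot p e J ((v + w) i) * Ideal.Quotient.mk _ (X i) :
      R ⧸ J.frobeniusPower (p ^ e)) = (∑ i, frobQuot p e J (v i) * Ideal.Quotient.mk _ (X i)) +
        ∑ i, frobQuot p e J (w i) * Ideal.Quotient.mk _ (X i)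
    simp [add_mul, Finset.sum_add_distrib]
  map_smul' t v := by
    change (∑ i, frobQuot p e J ((t • v) i) * Ideal.Quotient.mk _ (X i) :
      R ⧸ J.frobeniusPower (p ^ e)) =
        iterateFrobenius κ p e t • ∑ i, frobQuot p e J (v i) * Ideal.Quotient.mk _ (X i)
    simp [frobQuot_smul, Finset.smul_sum]

lemma frobSum_mk (m : ι → R) :
    frobSum (κ := κ) p e J X (fun i => Ideal.Quotient.mk J (m i)) =
      (Ideal.Quotient.mk (J.frobeniusPower (p ^ e)) (∑ i, m i ^ p ^ e * X i) :
        R ⧸ J.frobeniusPower (p ^ e)) := by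
  change (∑ i, frobQuot p e J _ * Ideal.Quotient.mk _ (X i) : R ⧸ J.frobeniusPower (p ^ e)) = _
  simp

/-- Multiplication by `E` on `R/J`. -/
noncomputable def mulQuot (κ : Type*) [Field κ] [Algebra κ R] (E : R) : (R ⧸ J) →ₗ[κ] (R ⧸ J) :=
  LinearMap.mulLeft κ (Ideal.Quotient.mk J E)

variable {c E : R}

/-- If `Φ : (m_i) ↦ ∑ m_i ^ Q * X i` has kernel killed by `c` and image containing `E ^ Q * R`,
then the kernel of the induced map `(R/J)^ι → R/J^{[Q]}` is killed by `c * E`. -/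
lemma frobSum_ker (hker : ∀ m : ι → R, ∑ i, m i ^ p ^ e * X i = 0 → ∀ i, c * m i = 0)
    (him : ∀ x : R, ∃ m : ι → R, ∑ i, m i ^ p ^ e * X i = E ^ p ^ e * x)
    (v : ι → R ⧸ J) (hv : frobSum (κ := κ) p e J X v = 0) (i : ι) :
    mulQuot J κ (c * E) (v i) = 0 := by
  have hsurj : ∀ i, ∃ x, Ideal.Quotient.mk J x = v i := fun i => Ideal.Quotient.mk_surjective _
  choose m hm using hsurj
  obtain rfl : (fun i => Ideal.Quotient.mk J (m i)) = v := funext hm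
  rw [frobSum_mk] at hv
  have hv' : ∑ i, m i ^ p ^ e * X i ∈ J.frobeniusPower (p ^ e) := Ideal.Quotient.eq_zero_iff_mem.1 hv
  -- every `z` in `J^{[Q]}` has `E ^ Q * z` in the image under `Φ` of vectors with entries in `J`
  have key : ∀ z ∈ J.frobeniusPower (p ^ e), ∀ b : R, ∃ m' : ι → R, (∀ i, m' i ∈ J) ∧
      ∑ i, m' i ^ p ^ e * X i = E ^ p ^ e * (b * z) := by
    intro z hz
    induction hz using Submodule.span_induction with
    | mem z hz =>
      intro b
      obtain ⟨y, hy, rfl⟩ := hz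
      obtain ⟨m', hm'⟩ := him b
      refine ⟨fun i => y * m' i, fun i => J.mul_mem_right _ hy, ?_⟩
      simp only [mul_pow, mul_assoc, ← Finset.mul_sum, hm']
      ring
    | zero =>
      intro b
      refine ⟨0, fun i => J.zero_mem, ?_⟩
      simp [(expChar_pos R p).ne']
    | add x y _ _ hx hy =>
      intro b
      obtain ⟨m₁, h₁, h₁'⟩ := hx b
      obtain ⟨m₂, h₂, h₂'⟩ := hy b
      refine ⟨m₁ + m₂, fun i => J.add_mem (h₁ i) (h₂ i), ?_⟩
      simp only [Pi.add_apply, add_pow_expChar_pow, add_mul, Finset.sum_add_distrib, h₁', h₂']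
      ring
    | smul a x _ hx =>
      intro b
      obtain ⟨m', h, h'⟩ := hx (b * a)
      exact ⟨m', h, by rw [h', smul_eq_mul]; ring⟩
  obtain ⟨m', hm', h⟩ := key _ hv' 1
  rw [one_mul] at h
  have := hker (fun i => E * m i - m' i) (by
    simp only [sub_pow_expChar_pow, sub_mul, Finset.sum_sub_distrib, h, mul_pow, mul_assoc,
      ← Finset.mul_sum, sub_self]) i
  have h2 : c * E * m i = c * m' i := by linear_combination this
  change Ideal.Quotient.mk J (c * E) * Ideal.Quotient.mk J (m i) = 0
  rw [← map_mul, h2, Ideal.Quotient.eq_zero_iff_mem]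
  exact J.mul_mem_left _ (hm' i)

/-- The kernel of `(R/J)^ι → R/J^{[Q]}` has dimension at most `|ι|` times the dimension of the
annihilator of `c * E` in `R/J`. -/
lemma finrank_ker_frobSum_le [Module.Finite κ (R ⧸ J)]
    (hker : ∀ m : ι → R, ∑ i, m i ^ p ^ e * X i = 0 → ∀ i, c * m i = 0)
    (him : ∀ x : R, ∃ m : ι → R, ∑ i, m i ^ p ^ e * X i = E ^ p ^ e * x) :
    Module.finrank κ (LinearMap.ker (frobSum (κ := κ) p e J X)) ≤
      Fintype.card ι * Module.finrank κ (LinearMap.ker (mulQuot J κ (c * E))) := by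
  have h := Module.finrank_pi_fintype κ (M := fun _ : ι => LinearMap.ker (mulQuot J κ (c * E)))
  rw [Finset.sum_const, Finset.card_univ, smul_eq_mul] at h
  rw [← h]
  let f : LinearMap.ker (frobSum (κ := κ) p e J X) →ₗ[κ] (ι → LinearMap.ker (mulQuot J κ (c * E))) :=
    LinearMap.pi fun i => LinearMap.codRestrict _
      ((LinearMap.proj i).comp (Submodule.subtype _)) fun v =>
        frobSum_ker p e J X hker him v.1 v.2 i
  refine LinearMap.finrank_le_finrank_of_injective (f := f) ?_
  intro v w hvw
  ext i
  exact congrArg Subtype.val (congrFun hvw i)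

variable [PerfectRing κ p]

/-- Lower bounds for the colength of `J^{[Q]}`. -/
lemma colength_frobenius_ge [Module.Finite κ (R ⧸ J)]
    [Module.Finite κ (R ⧸ J.frobeniusPower (p ^ e))]
    (hker : ∀ m : ι → R, ∑ i, m i ^ p ^ e * X i = 0 → ∀ i, c * m i = 0)
    (him : ∀ x : R, ∃ m : ι → R, ∑ i, m i ^ p ^ e * X i = E ^ p ^ e * x) :
    Fintype.card ι * Module.finrank κ (R ⧸ J) ≤
      Module.finrank κ (R ⧸ J.frobeniusPower (p ^ e)) +
        Fintype.card ι * Module.finrank κ (LinearMap.ker (mulQuot J κ (c * E))) := by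
  have h := Module.finrank_pi_fintype κ (M := fun _ : ι => R ⧸ J)
  rw [Finset.sum_const, Finset.card_univ, smul_eq_mul] at h
  rw [← h, ← LinearMap.finrank_range_add_finrank_ker (frobSum (κ := κ) p e J X),
    ← finrank_twist (iterateFrobenius κ p e) (R ⧸ J.frobeniusPower (p ^ e))
      (bijective_iterateFrobenius κ p e)]
  have := finite_twist (iterateFrobenius κ p e) (R ⧸ J.frobeniusPower (p ^ e))
      (bijective_iterateFrobenius κ p e)
  exact add_le_add (Submodule.finrank_le _) (finrank_ker_frobSum_le p e J X hker him)

/-- Upper bound for the colength of `J^{[Q]}`; the `X i * u j` generate `R` over its `Q`-th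
powers. -/
lemma colength_frobenius_le [Module.Finite κ (R ⧸ J)]
    [Module.Finite κ (R ⧸ J.frobeniusPower (p ^ e))] {r : ℕ} (u : Fin r → R)
    (hu : ∀ y : R, ∃ b : Fin r → ι → R, y = ∑ j, ∑ i, b j i ^ p ^ e * (X i * u j))
    (him : ∀ x : R, ∃ m : ι → R, ∑ i, m i ^ p ^ e * X i = E ^ p ^ e * x) :
    Module.finrank κ (R ⧸ J.frobeniusPower (p ^ e)) ≤ Fintype.card ι * Module.finrank κ (R ⧸ J) +
      r * Fintype.card ι * Module.finrank κ (R ⧸ (J ⊔ Ideal.span {c * E})) := by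
  have hσ := bijective_iterateFrobenius κ p e
  have := finite_twist (iterateFrobenius κ p e) (R ⧸ J.frobeniusPower (p ^ e)) hσ
  have h := Module.finrank_pi_fintype κ (M := fun _ : ι => R ⧸ J)
  rw [Finset.sum_const, Finset.card_univ, smul_eq_mul] at h
  rw [← finrank_twist (iterateFrobenius κ p e) (R ⧸ J.frobeniusPower (p ^ e)) hσ, ← h]
  set Φ := frobSum (κ := κ) p e J X
  set B := J ⊔ Ideal.span {c * E} with hB
  rw [← Submodule.finrank_quotient_add_finrank (LinearMap.range Φ), add_comm]
  refine add_le_add (LinearMap.finrank_range_le Φ) ?_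
  -- the quotient by the image of `Φ` is a quotient of a power of `R/B`
  let G := frobSum (κ := κ) p e J (fun ji : Fin r × ι => X ji.2 * u ji.1)
  let G' := (LinearMap.range Φ).mkQ.comp G
  have hG' : Function.Surjective G' := by
    refine (Submodule.mkQ_surjective _).comp ?_
    intro w
    obtain ⟨y, rfl⟩ := Ideal.Quotient.mk_surjective (I := J.frobeniusPower (p ^ e)) w
    obtain ⟨b, hb⟩ := hu y
    refine ⟨fun ji => Ideal.Quotient.mk J (b ji.1 ji.2), ?_⟩
    rw [frobSum_mk, Fintype.sum_prod_type, ← hb]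
  let q : (R ⧸ J) →ₗ[κ] (R ⧸ B) := (Ideal.Quotient.factorₐ κ (le_sup_left : J ≤ B)).toLinearMap
  have hq : Function.Surjective q := Ideal.Quotient.factor_surjective le_sup_left
  let qq : (Fin r × ι → R ⧸ J) →ₗ[κ] (Fin r × ι → R ⧸ B) :=
    LinearMap.pi fun ji => q.comp (LinearMap.proj ji)
  have hqq : Function.Surjective qq := by
    intro w
    choose v hv using fun ji => hq (w ji)
    exact ⟨v, funext hv⟩
  have hkerle : LinearMap.ker qq ≤ LinearMap.ker G' := by
    intro v hv
    have hv' : ∀ ji, ∃ a : R, v ji = Ideal.Quotient.mk J (c * E * a) := by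
      intro ji
      have h1 : q (v ji) = 0 := congrFun (LinearMap.mem_ker.1 hv) ji
      obtain ⟨y, hy⟩ := Ideal.Quotient.mk_surjective (v ji)
      rw [← hy] at h1 ⊢
      have h2 : y ∈ B := Ideal.Quotient.eq_zero_iff_mem.1 h1
      obtain ⟨j, hj, z, hz, rfl⟩ := Submodule.mem_sup.1 h2
      obtain ⟨a, rfl⟩ := Ideal.mem_span_singleton'.1 hz
      refine ⟨a, ?_⟩
      rw [map_add, Ideal.Quotient.eq_zero_iff_mem.2 hj, zero_add, mul_comm]
    choose a ha using hv'
    rw [funext ha]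
    refine LinearMap.mem_ker.2 ((Submodule.Quotient.mk_eq_zero _).2 ?_)
    obtain ⟨m, hm⟩ := him (c ^ p ^ e * ∑ ji : Fin r × ι, a ji ^ p ^ e * (X ji.2 * u ji.1))
    refine ⟨fun i => Ideal.Quotient.mk J (m i), ?_⟩
    rw [frobSum_mk, frobSum_mk, hm]
    simp only [mul_pow, mul_assoc, ← Finset.mul_sum]
    rw [mul_left_comm]
  have hfin : Module.Finite κ (R ⧸ B) := Module.Finite.of_surjective q hq
  have h2 := Module.finrank_pi_fintype κ (M := fun _ : Fin r × ι => R ⧸ B)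
  rw [Finset.sum_const, Finset.card_univ, smul_eq_mul, Fintype.card_prod, Fintype.card_fin] at h2
  rw [← h2]
  -- factor `G'` through `qq`
  let e' := qq.quotKerEquivOfSurjective hqq
  let G'' := ((LinearMap.ker qq).liftQ G' hkerle).comp e'.symm.toLinearMap
  refine LinearMap.finrank_le_finrank_of_surjective (f := G'') ?_
  intro w
  obtain ⟨v, rfl⟩ := hG' w
  refine ⟨e' (Submodule.Quotient.mk v), ?_⟩
  simp [G'']

/-- In a finite-dimensional `R/J`, the annihilator and the cokernel of `E` have equal dimension. -/
lemma finrank_ker_mulQuot [Module.Finite κ (R ⧸ J)] (F : R) :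
    Module.finrank κ (LinearMap.ker (mulQuot J κ F)) =
      Module.finrank κ (R ⧸ (J ⊔ Ideal.span {F})) := by
  have h1 := LinearMap.finrank_range_add_finrank_ker (mulQuot J κ F)
  have h2 := Submodule.finrank_quotient_add_finrank (LinearMap.range (mulQuot J κ F))
  let q : (R ⧸ J) →ₗ[κ] (R ⧸ (J ⊔ Ideal.span {F})) :=
    (Ideal.Quotient.factorₐ κ (le_sup_left : J ≤ J ⊔ Ideal.span {F})).toLinearMap
  have hq : Function.Surjective q := Ideal.Quotient.factor_surjective le_sup_left
  have h3 : LinearMap.ker q = LinearMap.range (mulQuot J κ F) := by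
    ext v
    obtain ⟨y, rfl⟩ := Ideal.Quotient.mk_surjective v
    constructor
    · intro h1
      have h2 : y ∈ J ⊔ Ideal.span {F} := Ideal.Quotient.eq_zero_iff_mem.1 h1
      obtain ⟨j, hj, z, hz, rfl⟩ := Submodule.mem_sup.1 h2
      obtain ⟨a, rfl⟩ := Ideal.mem_span_singleton'.1 hz
      refine ⟨Ideal.Quotient.mk J a, ?_⟩
      change Ideal.Quotient.mk J F * Ideal.Quotient.mk J a = _
      rw [map_add, Ideal.Quotient.eq_zero_iff_mem.2 hj, zero_add, mul_comm, map_mul]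
    · rintro ⟨a, ha⟩
      obtain ⟨a, rfl⟩ := Ideal.Quotient.mk_surjective a
      rw [← ha]
      change Ideal.Quotient.factor (le_sup_left : J ≤ J ⊔ Ideal.span {F}) (Ideal.Quotient.mk J F * Ideal.Quotient.mk J a) = 0
      rw [← map_mul, Ideal.Quotient.factor_mk, Ideal.Quotient.eq_zero_iff_mem]
      exact Ideal.mul_mem_right _ _ (Ideal.mem_sup_right (Ideal.mem_span_singleton_self F))
  have h4 := LinearMap.finrank_range_add_finrank_ker q
  rw [LinearMap.range_eq_top.2 hq, finrank_top, h3] at h4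
  omega

/-- If `c * E` does not lie in `J`, then `R/J^{[Q]}` has dimension at least `|ι|`. -/
lemma card_le_colength_frobenius [Module.Finite κ (R ⧸ J)]
    [Module.Finite κ (R ⧸ J.frobeniusPower (p ^ e))]
    (hker : ∀ m : ι → R, ∑ i, m i ^ p ^ e * X i = 0 → ∀ i, c * m i = 0)
    (him : ∀ x : R, ∃ m : ι → R, ∑ i, m i ^ p ^ e * X i = E ^ p ^ e * x) (hcE : c * E ∉ J) :
    Fintype.card ι ≤ Module.finrank κ (R ⧸ J.frobeniusPower (p ^ e)) := by
  have h := colength_frobenius_ge p e J X (κ := κ) hker him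
  have h1 := LinearMap.finrank_range_add_finrank_ker (mulQuot J κ (c * E))
  have h2 : 0 < Module.finrank κ (LinearMap.range (mulQuot J κ (c * E))) := by
    refine Submodule.one_le_finrank_iff.2 ?_
    intro h0
    refine hcE (Ideal.Quotient.eq_zero_iff_mem.1 ?_)
    have : mulQuot J κ (c * E) 1 = 0 := by
      rw [LinearMap.range_eq_bot.1 h0]; rfl
    change Ideal.Quotient.mk J (c * E) * 1 = 0 at this
    simpa using this
  rw [← h1] at h
  nlinarith

end LengthComparison

end SpreadHK

namespace SpreadHK

/-! ### Traces and Frobenius -/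

open Polynomial in
/-- In characteristic `p`, the trace commutes with `p ^ e`-th powers of matrices, because
`(X - M) ^ q = X ^ q - M ^ q` for `q = p ^ e`. -/
lemma trace_pow_expChar {ι R : Type*} [Fintype ι] [DecidableEq ι] [CommRing R] [IsDomain R]
    (p e : ℕ) [ExpChar R p] (M : Matrix ι ι R) :
    (M ^ p ^ e).trace = M.trace ^ p ^ e := by
  cases isEmpty_or_nonempty ι
  · simp [Matrix.trace, (expChar_pos R p).ne']
  have hpos : 0 < p ^ e := Nat.pow_pos (expChar_pos R p)
  have h1 : expand R (p ^ e) (M ^ p ^ e).charpoly = M.charpoly ^ p ^ e := by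
    unfold Matrix.charpoly
    rw [AlgHom.map_det, ← Matrix.coe_detMonoidHom,
      ← (Matrix.detMonoidHom : Matrix ι ι R[X] →* R[X]).map_pow]
    apply congr_arg Matrix.det
    refine matPolyEquiv.injective ?_
    have : ExpChar (Matrix ι ι R)[X] p :=
      expChar_of_injective_algebraMap (R := R) (FaithfulSMul.algebraMap_injective _ _) p
    rw [map_pow, Matrix.matPolyEquiv_charmatrix, sub_pow_expChar_pow_of_commute, ← C_pow]
    · exact (id (matPolyEquiv_eq_X_pow_sub_C (p ^ e) M) :)
    · exact (C M).commute_X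
  have h2 : (M ^ p ^ e).charpoly = M.charpoly.map (iterateFrobenius R p e) := by
    apply expand_injective hpos
    rw [h1, ← map_expand, map_iterateFrobenius_expand]
  rw [Matrix.trace_eq_neg_charpoly_coeff, Matrix.trace_eq_neg_charpoly_coeff, h2, coeff_map,
    iterateFrobenius_def, ← iterateFrobenius_def, ← iterateFrobenius_def, map_neg]

lemma sum_pow_expChar_pow {ι R : Type*} [CommRing R] (p f : ℕ) [ExpChar R p] (s : Finset ι)
    (y : ι → R) : (∑ i ∈ s, y i) ^ p ^ f = ∑ i ∈ s, y i ^ p ^ f := by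
  simp only [← iterateFrobenius_def, map_sum]

end SpreadHK

namespace SpreadHK

open MvPolynomial

/-! ### Polynomials over a perfect field as a free module over `Q`-th powers -/

section PolynomialBasis

variable {κ : Type*} [Field κ] (p f n : ℕ) [ExpChar κ p]

/-- The exponent vector of a reduced monomial, all of whose exponents are `< Q`. -/
noncomputable def redExp {n Q : ℕ} (α : Fin n → Fin Q) : Fin n →₀ ℕ :=
  Finsupp.equivFunOnFinite.symm fun i => (α i : ℕ)

@[simp] lemma redExp_apply {n Q : ℕ} (α : Fin n → Fin Q) (i : Fin n) : redExp α i = α i := rfl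

lemma exists_eq_sum_pow_mul [PerfectRing κ p] (a : MvPolynomial (Fin n) κ) :
    ∃ b : (Fin n → Fin (p ^ f)) → MvPolynomial (Fin n) κ,
      a = ∑ α, b α ^ p ^ f * monomial (redExp α) 1 := by
  have hQ : 0 < p ^ f := Nat.pow_pos (expChar_pos κ p)
  induction a using MvPolynomial.induction_on' with
  | monomial d t =>
    obtain ⟨s, rfl⟩ := (bijective_iterateFrobenius κ p f).2 t
    let α : Fin n → Fin (p ^ f) := fun i => ⟨d i % p ^ f, Nat.mod_lt _ hQ⟩
    let d' : Fin n →₀ ℕ := Finsupp.equivFunOnFinite.symm fun i => d i / p ^ f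
    refine ⟨Pi.single α (monomial d' s), ?_⟩
    rw [Finset.sum_eq_single α]
    · rw [Pi.single_eq_same, monomial_pow, monomial_mul, mul_one, iterateFrobenius_def]
      congr 2
      ext i
      simp [α, d', Nat.div_add_mod]
    · intro β _ hβ
      rw [Pi.single_eq_of_ne hβ, zero_pow hQ.ne', zero_mul]
    · simp
  | add a b ha hb =>
    obtain ⟨b₁, rfl⟩ := ha
    obtain ⟨b₂, rfl⟩ := hb
    refine ⟨b₁ + b₂, ?_⟩
    simp only [Pi.add_apply, add_pow_expChar_pow, add_mul, Finset.sum_add_distrib]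

lemma eq_zero_of_sum_pow_mul_eq_zero (b : (Fin n → Fin (p ^ f)) → MvPolynomial (Fin n) κ)
    (hb : ∑ α, b α ^ p ^ f * monomial (redExp α) 1 = 0) (α : Fin n → Fin (p ^ f)) : b α = 0 := by
  have hQ : p ^ f ≠ 0 := (Nat.pow_pos (expChar_pos κ p)).ne'
  ext d
  have h := congrArg (coeff (p ^ f • d + redExp α)) hb
  rw [coeff_sum, Finset.sum_eq_single α] at h
  · rw [coeff_mul_monomial, mul_one, ← map_iterateFrobenius_expand, coeff_map,
      coeff_expand_smul _ hQ, coeff_zero, map_eq_zero] at h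
    rw [h, coeff_zero]
  · intro β _ hβ
    rw [coeff_mul_monomial']
    split_ifs with hle
    · obtain ⟨i, hi⟩ := Function.ne_iff.1 hβ
      rw [mul_one, ← map_iterateFrobenius_expand, coeff_map, coeff_expand_of_not_dvd _ (i := i),
        map_zero]
      intro hdvd
      have hle' := hle i
      simp only [Finsupp.tsub_apply, Finsupp.add_apply, Finsupp.smul_apply, redExp_apply,
        smul_eq_mul] at hdvd hle'
      apply hi
      have h1 := (Nat.modEq_iff_dvd' hle').2 hdvd
      have h2 : (β i : ℕ) ≡ α i [MOD p ^ f] := by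
        refine h1.trans ?_
        simp [Nat.ModEq]
      rw [Nat.ModEq, Nat.mod_eq_of_lt (β i).2, Nat.mod_eq_of_lt (α i).2] at h2
      exact Fin.ext h2
    · rfl
  · simp

end PolynomialBasis

/-! ### Generically free algebras over a polynomial ring -/

/-- Data exhibiting an `A`-algebra `S` as a finite algebra over the polynomial ring
`P = A[X₁, …, Xₙ]`, acting through `x`, which becomes free of rank `r` after inverting `c ∈ P`:
`u` generates `S` over `P`, the family `e` is a basis up to `c`-torsion, and `π` is `c` times the
coordinate map of this basis. -/
structure NData (A S : Type*) [CommRing A] [CommRing S] [Algebra A S] (n r' r : ℕ) where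
  /-- the images of the variables -/
  x : Fin n → S
  /-- module generators over the polynomial ring -/
  u : Fin r' → S
  u_spec : ∀ y, ∃ a : Fin r' → MvPolynomial (Fin n) A, y = ∑ j, aeval x (a j) * u j
  /-- the basis -/
  e : Fin r → S
  /-- `c` times the coordinates in the basis -/
  π : S →ₗ[A] (Fin r → MvPolynomial (Fin n) A)
  π_mul : ∀ (a : MvPolynomial (Fin n) A) (y : S), π (aeval x a * y) = a • π y
  /-- the denominator -/
  c : MvPolynomial (Fin n) A
  π_e : ∀ i, π (e i) = Pi.single i c
  c_mul : ∀ y, aeval x c * y = ∑ i, aeval x (π y i) * e i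

namespace NData

section Basic

variable {A S : Type*} [CommRing A] [CommRing S] [Algebra A S] {n r' r : ℕ} (N : NData A S n r' r)

/-- `c` times the matrix of multiplication by `y`. -/
noncomputable def L (y : S) : Matrix (Fin r) (Fin r) (MvPolynomial (Fin n) A) :=
  Matrix.of fun i j => N.π (y * N.e j) i

/-- `c` times the trace of multiplication by `y`. -/
noncomputable def τ (y : S) : MvPolynomial (Fin n) A := (N.L y).trace

/-- The matrix of the (scaled) trace form. -/
noncomputable def gram : Matrix (Fin r) (Fin r) (MvPolynomial (Fin n) A) :=
  Matrix.of fun i j => N.τ (N.e i * N.e j)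

/-- The (scaled) discriminant. -/
noncomputable def D : MvPolynomial (Fin n) A := N.gram.det

/-- The coordinates, scaled by `c`, of the `Q`-th powers of the basis elements. -/
noncomputable def w (Q : ℕ) : Matrix (Fin r) (Fin r) (MvPolynomial (Fin n) A) :=
  Matrix.of fun i j => N.π (N.e i ^ Q) j

lemma L_mul (y z : S) : N.L y * N.L z = N.c • N.L (y * z) := by
  ext1 i j
  have h : N.c * N.π (y * z * N.e j) i = N.π (y * (aeval N.x N.c * (z * N.e j))) i := by
    rw [show y * (aeval N.x N.c * (z * N.e j)) = aeval N.x N.c * (y * z * N.e j) by ring,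
      N.π_mul]
    rfl
  rw [Matrix.mul_apply, Matrix.smul_apply, smul_eq_mul]
  simp only [L, Matrix.of_apply]
  rw [h, N.c_mul, Finset.mul_sum, map_sum, Finset.sum_apply]
  refine Finset.sum_congr rfl fun k _ => ?_
  rw [mul_left_comm, N.π_mul, Pi.smul_apply, smul_eq_mul, mul_comm]

lemma L_pow (y : S) (k : ℕ) : N.L y ^ (k + 1) = N.c ^ k • N.L (y ^ (k + 1)) := by
  induction k with
  | zero => simp
  | succ k ih =>
    rw [pow_succ, ih, Matrix.smul_mul, L_mul, smul_smul, ← pow_succ, ← pow_succ]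

lemma τ_mul (a : MvPolynomial (Fin n) A) (y : S) : N.τ (aeval N.x a * y) = a * N.τ y := by
  simp only [τ, L, Matrix.trace, Matrix.diag_apply, Matrix.of_apply, mul_assoc, N.π_mul,
    Pi.smul_apply, smul_eq_mul, Finset.mul_sum]

lemma τ_sum {ι : Type*} (s : Finset ι) (y : ι → S) : N.τ (∑ i ∈ s, y i) = ∑ i ∈ s, N.τ (y i) := by
  simp only [τ, L, Matrix.trace, Matrix.diag_apply, Matrix.of_apply, Finset.sum_mul, map_sum,
    Finset.sum_apply]
  rw [Finset.sum_comm]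

lemma c_mul_pow_e (Q : ℕ) (i : Fin r) :
    aeval N.x N.c * N.e i ^ Q = ∑ j, aeval N.x (N.w Q i j) * N.e j := by
  rw [N.c_mul]; rfl

lemma c_sq_mul_τ (Q : ℕ) (i k : Fin r) :
    N.c ^ 2 * N.τ (N.e i ^ Q * N.e k ^ Q) = (N.w Q * N.gram * (N.w Q).transpose) i k := by
  rw [← N.τ_mul, map_pow, show aeval N.x N.c ^ 2 * (N.e i ^ Q * N.e k ^ Q) =
    (aeval N.x N.c * N.e i ^ Q) * (aeval N.x N.c * N.e k ^ Q) by ring, c_mul_pow_e, c_mul_pow_e,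
    Finset.sum_mul_sum, τ_sum]
  simp only [τ_sum, Matrix.mul_apply, Matrix.transpose_apply, Finset.sum_mul]
  rw [Finset.sum_comm]
  refine Finset.sum_congr rfl fun b _ => Finset.sum_congr rfl fun a _ => ?_
  rw [show aeval N.x (N.w Q i a) * N.e a * (aeval N.x (N.w Q k b) * N.e b) =
    aeval N.x (N.w Q i a * N.w Q k b) * (N.e a * N.e b) by rw [map_mul]; ring, τ_mul]
  simp only [gram, Matrix.of_apply]
  ring

end Basic

section CharP

variable {κ R : Type*} [Field κ] [CommRing R] [Algebra κ R] {n r' r : ℕ} (N : NData κ R n r' r)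
  (p f : ℕ) [ExpChar κ p]

lemma τ_pow (y : R) : N.c ^ (p ^ f - 1) * N.τ (y ^ p ^ f) = N.τ y ^ p ^ f := by
  have hQ : 0 < p ^ f := Nat.pow_pos (expChar_pos κ p)
  have h := N.L_pow y (p ^ f - 1)
  rw [Nat.sub_add_cancel hQ] at h
  have h2 := trace_pow_expChar p f (N.L y)
  rw [h, Matrix.trace_smul, smul_eq_mul] at h2
  exact h2

/-- Comparison of the discriminant with the determinant of the matrix of `Q`-th powers of the
basis: the trace form is compatible with Frobenius. -/
lemma det_w_sq (hD : N.D ≠ 0) :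
    N.c ^ (2 * r) * N.D ^ (p ^ f - 1) =
      N.c ^ ((p ^ f - 1) * r) * (N.w (p ^ f)).det ^ 2 := by
  have hQ : 0 < p ^ f := Nat.pow_pos (expChar_pos κ p)
  have h : N.c ^ 2 • (iterateFrobenius (MvPolynomial (Fin n) κ) p f).mapMatrix N.gram =
      N.c ^ (p ^ f - 1) • (N.w (p ^ f) * N.gram * (N.w (p ^ f)).transpose) := by
    ext1 i k
    rw [Matrix.smul_apply, Matrix.smul_apply, ← N.c_sq_mul_τ]
    simp only [RingHom.mapMatrix_apply, Matrix.map_apply, gram, Matrix.of_apply, smul_eq_mul,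
      iterateFrobenius_def]
    rw [← N.τ_pow p f, mul_pow]
    ring
  have h2 := congrArg Matrix.det h
  rw [Matrix.det_smul, Matrix.det_smul, ← RingHom.map_det, Matrix.det_mul, Matrix.det_mul,
    Matrix.det_transpose, Fintype.card_fin, ← pow_mul, ← pow_mul, iterateFrobenius_def] at h2
  change N.c ^ (2 * r) * N.D ^ p ^ f = _ * (_ * N.D * _) at h2
  apply mul_right_cancel₀ hD
  rw [mul_assoc, ← pow_succ, Nat.sub_add_cancel hQ, h2]
  ring

lemma det_w_ne_zero (hc : N.c ≠ 0) (hD : N.D ≠ 0) : (N.w (p ^ f)).det ≠ 0 := by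
  intro h
  have := N.det_w_sq p f hD
  rw [h] at this
  simp [hc, hD] at this

/-- The element `E` with `E ^ Q * R` inside the span of `Q`-th powers of `R` and reduced
monomials. -/
noncomputable def E : MvPolynomial (Fin n) κ := N.c ^ (2 * r + 1) * N.D

/-- The monomials `x ^ α`, all exponents `< Q`. -/
noncomputable def mono (Q : ℕ) (α : Fin n → Fin Q) : R := aeval N.x (monomial (redExp α) (1 : κ))

lemma exists_eq_sum_sum [PerfectRing κ p] (y : R) :
    ∃ b : Fin r' → (Fin n → Fin (p ^ f)) → R,
      y = ∑ j, ∑ α, b j α ^ p ^ f * (N.mono (p ^ f) α * N.u j) := by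
  obtain ⟨a, ha⟩ := N.u_spec y
  choose b hb using fun j => exists_eq_sum_pow_mul p f n (a j)
  refine ⟨fun j α => aeval N.x (b j α), ?_⟩
  rw [ha]
  refine Finset.sum_congr rfl fun j _ => ?_
  conv_lhs => rw [hb j]
  simp only [map_sum, map_mul, map_pow, Finset.sum_mul, mul_assoc, mono]

variable [ExpChar R p]

/-- Up to `c`-torsion, the reduced monomials are linearly independent over the `Q`-th powers of
`R`. -/
lemma c_mul_eq_zero_of_sum (hc : N.c ≠ 0) (hD : N.D ≠ 0) (m : (Fin n → Fin (p ^ f)) → R)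
    (hm : ∑ α, m α ^ p ^ f * N.mono (p ^ f) α = 0) (α : Fin n → Fin (p ^ f)) :
    aeval N.x N.c * m α = 0 := by
  let y : Fin r → MvPolynomial (Fin n) κ :=
    fun i => ∑ α, N.π (m α) i ^ p ^ f * monomial (redExp α) 1
  have h1 : ∑ i, aeval N.x (y i) * N.e i ^ p ^ f = 0 := by
    have : ∑ α, (aeval N.x N.c * m α) ^ p ^ f * N.mono (p ^ f) α = 0 := by
      simp only [mul_pow, mul_assoc, ← Finset.mul_sum, hm, mul_zero]
    rw [← this]
    simp only [y, map_sum, Finset.sum_mul, N.c_mul, sum_pow_expChar_pow]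
    rw [Finset.sum_comm]
    refine Finset.sum_congr rfl fun α _ => Finset.sum_congr rfl fun i _ => ?_
    rw [map_mul, map_pow, mul_pow, mono]
    ring
  have h2 : Matrix.vecMul y (N.w (p ^ f)) = 0 := by
    have h3 : ∑ j, aeval N.x (Matrix.vecMul y (N.w (p ^ f)) j) * N.e j = 0 := by
      have : ∑ i, aeval N.x (y i) * (aeval N.x N.c * N.e i ^ p ^ f) = 0 := by
        simp only [mul_left_comm _ (aeval N.x N.c), ← Finset.mul_sum, h1, mul_zero]
      rw [← this]
      simp only [c_mul_pow_e, Finset.mul_sum, Matrix.vecMul, dotProduct, map_sum, Finset.sum_mul]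
      rw [Finset.sum_comm]
      refine Finset.sum_congr rfl fun α _ => Finset.sum_congr rfl fun i _ => ?_
      rw [map_mul, mul_assoc]
    have h4 := congrArg N.π h3
    simp only [map_sum, N.π_mul, N.π_e, map_zero] at h4
    ext1 j
    have h5 := congrFun h4 j
    rw [Finset.sum_apply, Finset.sum_eq_single j] at h5
    · simpa [hc] using h5
    · intro k _ hk
      simp [Pi.single_eq_of_ne' hk]
    · simp
  have h3 : y = 0 := Matrix.eq_zero_of_vecMul_eq_zero (N.det_w_ne_zero p f hc hD) h2
  rw [N.c_mul]
  refine Finset.sum_eq_zero fun i _ => ?_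
  rw [eq_zero_of_sum_pow_mul_eq_zero p f n (fun α => N.π (m α) i) (congrFun h3 i) α, map_zero,
    zero_mul]

/-- The span of the reduced monomials over the `Q`-th powers of `R` contains `E ^ Q * R`.  This
rests on `det_w_sq`: the matrix `w`, which expresses the `Q`-th powers of the basis in the basis, can
be inverted up to a power of `c` and of the discriminant. -/
lemma exists_sum_eq [PerfectRing κ p] (hD : N.D ≠ 0) (x : R) :
    ∃ m : (Fin n → Fin (p ^ f)) → R,
      ∑ α, m α ^ p ^ f * N.mono (p ^ f) α = aeval N.x N.E ^ p ^ f * x := by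
  have hQ : 0 < p ^ f := Nat.pow_pos (expChar_pos κ p)
  obtain ⟨z, hz⟩ : ∃ z : Fin r → MvPolynomial (Fin n) κ,
      aeval N.x N.E ^ p ^ f * x = ∑ i, aeval N.x (z i) * N.e i ^ p ^ f := by
    set W := N.w (p ^ f)
    have h1 : ∀ j, aeval N.x W.det * N.e j =
        ∑ i, aeval N.x (W.adjugate j i * N.c) * N.e i ^ p ^ f := by
      intro j
      have : ∀ i, aeval N.x (W.adjugate j i * N.c) * N.e i ^ p ^ f =
          ∑ k, aeval N.x (W.adjugate j i * W i k) * N.e k := by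
        intro i
        rw [map_mul, mul_assoc, c_mul_pow_e, Finset.mul_sum]
        simp only [map_mul, mul_assoc, W]
      simp only [this]
      rw [Finset.sum_comm]
      simp only [← Finset.sum_mul, ← map_sum, ← Matrix.mul_apply, Matrix.adjugate_mul]
      rw [Finset.sum_eq_single j]
      · simp
      · intro k _ hk
        simp [Matrix.one_apply_ne' hk]
      · simp
    have h2 : aeval N.x (N.c * W.det) * x = ∑ i, aeval N.x
        (∑ j, N.π x j * (W.adjugate j i * N.c)) * N.e i ^ p ^ f := by
      rw [map_mul, mul_right_comm, N.c_mul, Finset.sum_mul]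
      simp only [map_sum, Finset.sum_mul]
      rw [Finset.sum_comm]
      refine Finset.sum_congr rfl fun j _ => ?_
      rw [mul_right_comm, mul_assoc, h1, Finset.mul_sum]
      simp only [map_mul, mul_assoc]
    have h3 : N.E ^ p ^ f = (N.c ^ ((2 * r + 1) * (p ^ f - 1)) * N.D) *
        (N.c ^ ((p ^ f - 1) * r) * W.det) * (N.c * W.det) := by
      have := N.det_w_sq p f hD
      rw [E, mul_pow, ← pow_mul]
      obtain ⟨q, hq⟩ : ∃ q, p ^ f = q + 1 := ⟨p ^ f - 1, by omega⟩
      have e1 : p ^ f - 1 = q := by omega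
      rw [e1] at this ⊢
      rw [hq]
      linear_combination (N.c ^ ((2 * r + 1) * q) * N.D * N.c) * this
    refine ⟨fun i => (N.c ^ ((2 * r + 1) * (p ^ f - 1)) * N.D) *
        (N.c ^ ((p ^ f - 1) * r) * W.det) * ∑ j, N.π x j * (W.adjugate j i * N.c), ?_⟩
    rw [← map_pow, h3, map_mul, mul_assoc, h2, Finset.mul_sum]
    simp only [map_mul, mul_assoc]
  choose b hb using fun i => exists_eq_sum_pow_mul p f n (z i)
  refine ⟨fun α => ∑ i, aeval N.x (b i α) * N.e i, ?_⟩
  rw [hz]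
  simp only [sum_pow_expChar_pow, Finset.sum_mul]
  rw [Finset.sum_comm]
  refine Finset.sum_congr rfl fun i _ => ?_
  conv_rhs => rw [hb i]
  rw [map_sum, Finset.sum_mul]
  refine Finset.sum_congr rfl fun α _ => ?_
  rw [map_mul, map_pow, mul_pow, mono]
  ring

end CharP

end NData

end SpreadHK

namespace SpreadHK

open MvPolynomial

/-! ### Counting monomials -/

section Counting

/-- In the box `[0, M)ⁿ` there are at most `δ * M ^ (n - 1)` vectors having some coordinate
`c i < μ i`, if the `μ i` sum up to at most `δ`. -/
lemma card_box_le {n : ℕ} (M δ : ℕ) (μ : Fin n → ℕ) (hμ : ∑ i, μ i ≤ δ) :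
    M * ((Fintype.piFinset fun _ : Fin n => Finset.range M).filter
      fun c => ∃ i, c i < μ i).card ≤ δ * M ^ n := by
  classical
  have h1 : ((Fintype.piFinset fun _ : Fin n => Finset.range M).filter fun c => ∃ i, c i < μ i) ⊆
      Finset.univ.biUnion fun i => Fintype.piFinset
        (Function.update (fun _ : Fin n => Finset.range M) i (Finset.range (μ i))) := by
    intro c hc
    obtain ⟨hc1, i, hi⟩ := Finset.mem_filter.1 hc
    refine Finset.mem_biUnion.2 ⟨i, Finset.mem_univ _, Fintype.mem_piFinset.2 fun j => ?_⟩
    by_cases hj : j = i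
    · subst hj
      simpa using hi
    · rw [Function.update_of_ne hj]
      exact Fintype.mem_piFinset.1 hc1 j
  have h2 : ∀ i, M * (Fintype.piFinset (Function.update (fun _ : Fin n => Finset.range M) i
      (Finset.range (μ i)))).card = μ i * M ^ n := by
    intro i
    rw [Fintype.card_piFinset, ← Finset.mul_prod_erase _ _ (Finset.mem_univ i),
      Function.update_self, Finset.card_range, Finset.prod_congr rfl (g := fun _ => M)]
    · rw [Finset.prod_const, Finset.card_erase_of_mem (Finset.mem_univ i), Finset.card_univ,
        Fintype.card_fin]
      have : n = (n - 1) + 1 := by have := i.2; omega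
      conv_rhs => rw [this, pow_succ]
      ring
    · intro j hj
      rw [Function.update_of_ne (Finset.ne_of_mem_erase hj), Finset.card_range]
  calc _ ≤ M * ∑ i, (Fintype.piFinset (Function.update (fun _ : Fin n => Finset.range M) i
      (Finset.range (μ i)))).card :=
        Nat.mul_le_mul_left _ ((Finset.card_le_card h1).trans Finset.card_biUnion_le)
    _ = (∑ i, μ i) * M ^ n := by rw [Finset.mul_sum, Finset.sum_mul]; simp only [h2]
    _ ≤ _ := Nat.mul_le_mul_right _ hμ

variable {κ : Type*} [Field κ] {n : ℕ}

lemma aeval_X_ne_zero (i : Fin n) {h : Polynomial κ} (hh : h ≠ 0) :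
    Polynomial.aeval (X i : MvPolynomial (Fin n) κ) h ≠ 0 := by
  intro h0
  exact hh ((transcendental_iff.1 (transcendental_X κ i)) h h0)

lemma exists_single_of_mem_support (i : Fin n) (h : Polynomial κ) (s : Fin n →₀ ℕ)
    (hs : s ∈ (Polynomial.aeval (X i : MvPolynomial (Fin n) κ) h).support) :
    ∃ k ≤ h.natDegree, s = Finsupp.single i k := by
  rw [Polynomial.aeval_eq_sum_range] at hs
  obtain ⟨k, hk, hs⟩ := Finset.mem_biUnion.1 (support_sum hs)
  refine ⟨k, by simpa [Nat.lt_succ_iff] using hk, ?_⟩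
  have := support_smul hs
  rw [support_X_pow, Finset.mem_singleton] at this
  exact this

end Counting

namespace NData

variable {κ R : Type*} [Field κ] [CommRing R] [Algebra κ R] {n r' r : ℕ} (N : NData κ R n r' r)

/-- If an ideal `B` contains polynomials `b l` in the `x i`, then division with remainder bounds the
colength of `B` by the number of monomials not divisible by a leading monomial of the `b l`. -/
lemma finrank_quot_le (B : Ideal R) {ι : Type*} (b : ι → MvPolynomial (Fin n) κ)
    (hb : ∀ l, b l ≠ 0) (hbB : ∀ l, aeval N.x (b l) ∈ B) (T : Finset (Fin n → ℕ))
    (hT : ∀ c : Fin n →₀ ℕ, (∀ l, ¬ MonomialOrder.lex.degree (b l) ≤ c) → ⇑c ∈ T) :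
    Module.Finite κ (R ⧸ B) ∧ Module.finrank κ (R ⧸ B) ≤ r' * T.card := by
  classical
  let v : Fin r' × T → R ⧸ B := fun jc => Ideal.Quotient.mk B
    (aeval N.x (monomial (Finsupp.equivFunOnFinite.symm jc.2.1) (1 : κ)) * N.u jc.1)
  have hspan : Submodule.span κ (Set.range v) = ⊤ := by
    rw [eq_top_iff]
    rintro y -
    obtain ⟨y, rfl⟩ := Ideal.Quotient.mk_surjective y
    obtain ⟨a, ha⟩ := N.u_spec y
    rw [ha, map_sum]
    refine Submodule.sum_mem _ fun j _ => ?_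
    obtain ⟨g, s, hgs, -, hs⟩ := MonomialOrder.lex.div (b := b)
      (fun l => (MonomialOrder.leadingCoeff_ne_zero_iff.2 (hb l)).isUnit) (a j)
    have h1 : Ideal.Quotient.mk B (aeval N.x (a j) * N.u j) =
        Ideal.Quotient.mk B (aeval N.x s * N.u j) := by
      rw [Ideal.Quotient.eq, hgs, map_add, add_mul, add_sub_cancel_right]
      refine B.mul_mem_right _ ?_
      rw [Finsupp.linearCombination_apply, Finsupp.sum, map_sum]
      refine B.sum_mem fun l _ => ?_
      rw [smul_eq_mul, map_mul]
      exact B.mul_mem_left _ (hbB l)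
    rw [h1]
    conv in aeval N.x s => rw [s.as_sum]
    rw [map_sum, Finset.sum_mul, map_sum]
    refine Submodule.sum_mem _ fun c hc => ?_
    have h2 : Ideal.Quotient.mk B (aeval N.x (monomial c (coeff c s)) * N.u j) =
        coeff c s • v (j, ⟨⇑c, hT c (hs c hc)⟩) := by
      simp only [v]
      rw [← Ideal.Quotient.mkₐ_eq_mk κ, ← map_smul, ← smul_mul_assoc, ← map_smul, smul_monomial,
        smul_eq_mul, mul_one]
      congr 5
      ext i
      rfl
    rw [h2]
    exact Submodule.smul_mem _ _ (Submodule.subset_span ⟨_, rfl⟩)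
  constructor
  · exact ⟨⟨Finset.univ.image v, by simpa using hspan⟩⟩
  · have := finrank_le_of_span_eq_top hspan
    simpa using this

lemma degree_aeval_X_pow {κ : Type*} [Field κ] (i : Fin n) {h : Polynomial κ} (h0 : h ≠ 0) (q : ℕ) :
    ∃ k ≤ h.natDegree * q, MonomialOrder.lex.degree
      (Polynomial.aeval (X i : MvPolynomial (Fin n) κ) h ^ q) = Finsupp.single i k := by
  obtain ⟨k, hk, hk'⟩ := exists_single_of_mem_support i h _
    (MonomialOrder.lex.degree_mem_support (aeval_X_ne_zero i h0))
  refine ⟨k * q, Nat.mul_le_mul_right _ hk, ?_⟩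
  rw [MonomialOrder.degree_pow, hk', Finsupp.smul_single, smul_eq_mul, mul_comm]

lemma aeval_aeval_X_pow_mem {I : Ideal R} {i : Fin n} {h : Polynomial κ}
    (hI : Polynomial.aeval (N.x i) h ∈ I) (q : ℕ) :
    aeval N.x (Polynomial.aeval (X i : MvPolynomial (Fin n) κ) h ^ q) ∈ I.frobeniusPower q := by
  rw [map_pow, ← Polynomial.aeval_algHom_apply, aeval_X]
  exact pow_mem_frobeniusPower hI q

/-- If each `x i` is a root modulo `I` of a polynomial of degree at most `d`, then `R/I^{[q]}` is
spanned over the `u j` by the monomials in the box `[0, dq)ⁿ`. -/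
lemma finrank_frobeniusPower_le (I : Ideal R) (h : Fin n → Polynomial κ) (h0 : ∀ i, h i ≠ 0)
    (hI : ∀ i, Polynomial.aeval (N.x i) (h i) ∈ I) {d : ℕ} (hd : ∀ i, (h i).natDegree ≤ d)
    (q : ℕ) : Module.Finite κ (R ⧸ I.frobeniusPower q) ∧
    Module.finrank κ (R ⧸ I.frobeniusPower q) ≤ r' * (d * q) ^ n := by
  have := N.finrank_quot_le (I.frobeniusPower q)
    (fun i => Polynomial.aeval (X i : MvPolynomial (Fin n) κ) (h i) ^ q)
    (fun i => pow_ne_zero _ (aeval_X_ne_zero i (h0 i)))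
    (fun i => N.aeval_aeval_X_pow_mem (hI i) q)
    (Fintype.piFinset fun _ : Fin n => Finset.range (d * q)) (by
      intro c hc
      refine Fintype.mem_piFinset.2 fun i => Finset.mem_range.2 ?_
      obtain ⟨k, hk, hk'⟩ := degree_aeval_X_pow i (h0 i) q
      have h1 := hc i
      rw [hk', Finsupp.single_le_iff, not_le] at h1
      exact h1.trans_le (hk.trans (Nat.mul_le_mul_right _ (hd i))))
  simpa using this

/-- Adding one nonzero polynomial of bounded degree to `I^{[q]}` lowers the growth order of the
colength from `q ^ n` to `q ^ (n - 1)`. -/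
lemma finrank_frobeniusPower_sup_le (I : Ideal R) (h : Fin n → Polynomial κ) (h0 : ∀ i, h i ≠ 0)
    (hI : ∀ i, Polynomial.aeval (N.x i) (h i) ∈ I) {d : ℕ} (hd : ∀ i, (h i).natDegree ≤ d)
    (q : ℕ) (F : MvPolynomial (Fin n) κ) (hF : F ≠ 0) {δ : ℕ} (hδ : F.totalDegree ≤ δ) :
    (d * q) * Module.finrank κ (R ⧸ (I.frobeniusPower q ⊔ Ideal.span {aeval N.x F})) ≤
      r' * (δ * (d * q) ^ n) := by
  classical
  set μ := MonomialOrder.lex.degree F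
  have hμ : ∑ i, μ i ≤ δ := by
    refine le_trans ?_ hδ
    have := le_totalDegree (MonomialOrder.lex.degree_mem_support hF)
    rwa [Finsupp.sum_fintype _ _ (fun _ => rfl)] at this
  have := (N.finrank_quot_le (I.frobeniusPower q ⊔ Ideal.span {aeval N.x F})
    (fun l : Option (Fin n) => l.elim F
      fun i => Polynomial.aeval (X i : MvPolynomial (Fin n) κ) (h i) ^ q)
    (by
      rintro (_ | i)
      · exact hF
      · exact pow_ne_zero _ (aeval_X_ne_zero i (h0 i)))
    (by
      rintro (_ | i)
      · exact Ideal.mem_sup_right (Ideal.mem_span_singleton_self _)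
      · exact Ideal.mem_sup_left (N.aeval_aeval_X_pow_mem (hI i) q))
    ((Fintype.piFinset fun _ : Fin n => Finset.range (d * q)).filter fun c => ∃ i, c i < μ i) (by
      intro c hc
      refine Finset.mem_filter.2 ⟨Fintype.mem_piFinset.2 fun i => Finset.mem_range.2 ?_, ?_⟩
      · obtain ⟨k, hk, hk'⟩ := degree_aeval_X_pow i (h0 i) q
        have h1 := hc (some i)
        change ¬ MonomialOrder.lex.degree (Polynomial.aeval (X i : MvPolynomial (Fin n) κ) (h i) ^ q)
          ≤ c at h1
        rw [hk', Finsupp.single_le_iff, not_le] at h1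
        exact h1.trans_le (hk.trans (Nat.mul_le_mul_right _ (hd i)))
      · by_contra! hcon
        exact hc none hcon)).2
  calc _ ≤ (d * q) * (r' * _) := Nat.mul_le_mul_left _ this
    _ = r' * ((d * q) * _) := by ring
    _ ≤ _ := Nat.mul_le_mul_left _ (card_box_le (d * q) δ μ hμ)

/-! ### Uniform convergence of Hilbert–Kunz functions -/

section Uniform

variable (p : ℕ) [ExpChar κ p] [ExpChar R p] [PerfectRing κ p]

/-- The colength of the `p ^ f`-th Frobenius power. -/
noncomputable def hk (_N : NData κ R n r' r) (p : ℕ) (I : Ideal R) (f : ℕ) : ℕ :=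
  Module.finrank κ (R ⧸ I.frobeniusPower (p ^ f))

/-- The polynomial cutting out the locus where the comparison between `R/I^{[q]}` and
`R/I^{[qQ]}` fails. -/
noncomputable def bad (N : NData κ R n r' r) : MvPolynomial (Fin n) κ := N.c * N.E

/-- The comparison of Hilbert–Kunz functions at `p ^ f` and `p ^ (e + f)`, with error terms
uniform in `e`, `f` and `p`. -/
lemma hk_compare (hc : N.c ≠ 0) (hD : N.D ≠ 0) (I : Ideal R) (h : Fin n → Polynomial κ)
    (h0 : ∀ i, h i ≠ 0) (hI : ∀ i, Polynomial.aeval (N.x i) (h i) ∈ I) {d δ : ℕ} (hd0 : 0 < d)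
    (hd : ∀ i, (h i).natDegree ≤ d) (hδ : N.bad.totalDegree ≤ δ) (e f : ℕ) :
    p ^ f * (p ^ (e * n) * N.hk p I f) ≤ p ^ f * N.hk p I (e + f) +
        r' * (δ * d ^ n) * (p ^ (e * n) * p ^ (f * n)) ∧
      p ^ f * N.hk p I (e + f) ≤ p ^ f * (p ^ (e * n) * N.hk p I f) +
        r' * (r' * (δ * d ^ n)) * (p ^ (e * n) * p ^ (f * n)) := by
  have hfin := fun q => (N.finrank_frobeniusPower_le I h h0 hI hd q).1
  set J := I.frobeniusPower (p ^ f) with hJ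
  have hJJ : J.frobeniusPower (p ^ e) = I.frobeniusPower (p ^ (e + f)) :=
    frobeniusPower_frobeniusPower p f e I
  have i1 : Module.Finite κ (R ⧸ J) := hfin _
  have i2 : Module.Finite κ (R ⧸ J.frobeniusPower (p ^ e)) := by rw [hJJ]; exact hfin _
  have hbad : aeval N.x N.c * aeval N.x N.E = aeval N.x N.bad := by rw [bad, map_mul]
  have hbad0 : N.bad ≠ 0 := mul_ne_zero hc (mul_ne_zero (pow_ne_zero _ hc) hD)
  have g1 := colength_frobenius_ge p e J (N.mono (p ^ e)) (κ := κ)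
    (N.c_mul_eq_zero_of_sum p e hc hD) (N.exists_sum_eq p e hD)
  have g2 := colength_frobenius_le p e J (N.mono (p ^ e)) (κ := κ) (c := aeval N.x N.c) N.u
    (N.exists_eq_sum_sum p e) (N.exists_sum_eq p e hD)
  rw [finrank_ker_mulQuot] at g1
  have g3 := N.finrank_frobeniusPower_sup_le I h h0 hI hd (p ^ f) N.bad hbad0 hδ
  rw [hbad] at g1 g2
  rw [hJJ] at g1 g2
  have hcard : Fintype.card (Fin n → Fin (p ^ e)) = p ^ (e * n) := by simp [pow_mul]
  rw [hcard] at g1 g2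
  set K := Module.finrank κ (R ⧸ (J ⊔ Ideal.span {aeval N.x N.bad}))
  have g4 : p ^ f * K ≤ r' * (δ * d ^ n) * p ^ (f * n) := by
    refine le_trans ?_ (g3.trans (le_of_eq ?_))
    · calc p ^ f * K = 1 * (p ^ f * K) := (one_mul _).symm
        _ ≤ d * (p ^ f * K) := Nat.mul_le_mul_right _ hd0
        _ = _ := by ring
    · rw [mul_pow, pow_mul]; ring
  change p ^ (e * n) * N.hk p I f ≤ N.hk p I (e + f) + p ^ (e * n) * K at g1
  change N.hk p I (e + f) ≤ p ^ (e * n) * N.hk p I f + r' * p ^ (e * n) * K at g2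
  constructor
  · calc _ ≤ p ^ f * (N.hk p I (e + f) + p ^ (e * n) * K) := Nat.mul_le_mul_left _ g1
      _ = p ^ f * N.hk p I (e + f) + p ^ (e * n) * (p ^ f * K) := by ring
      _ ≤ p ^ f * N.hk p I (e + f) + p ^ (e * n) * (r' * (δ * d ^ n) * p ^ (f * n)) := by gcongr
      _ = _ := by ring
  · calc _ ≤ p ^ f * (p ^ (e * n) * N.hk p I f + r' * p ^ (e * n) * K) := Nat.mul_le_mul_left _ g2
      _ = p ^ f * (p ^ (e * n) * N.hk p I f) + r' * p ^ (e * n) * (p ^ f * K) := by ring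
      _ ≤ p ^ f * (p ^ (e * n) * N.hk p I f) +
          r' * p ^ (e * n) * (r' * (δ * d ^ n) * p ^ (f * n)) := by gcongr
      _ = _ := by ring

/-- If `bad` is outside some Frobenius power of `I`, then the colength grows like `q ^ n`; in
particular its growth order detects `n`. -/
lemma pow_le_hk (hc : N.c ≠ 0) (hD : N.D ≠ 0) (I : Ideal R) (h : Fin n → Polynomial κ)
    (h0 : ∀ i, h i ≠ 0) (hI : ∀ i, Polynomial.aeval (N.x i) (h i) ∈ I) (e f : ℕ)
    (hbad : aeval N.x N.bad ∉ I.frobeniusPower (p ^ f)) :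
    p ^ (e * n) ≤ N.hk p I (e + f) := by
  have hfin := fun q => (N.finrank_frobeniusPower_le I h h0 hI
    (d := Finset.univ.sup fun i => (h i).natDegree)
    (fun i => Finset.le_sup (f := fun i => (h i).natDegree) (Finset.mem_univ i)) q).1
  set J := I.frobeniusPower (p ^ f) with hJ
  have hJJ : J.frobeniusPower (p ^ e) = I.frobeniusPower (p ^ (e + f)) :=
    frobeniusPower_frobeniusPower p f e I
  have i1 : Module.Finite κ (R ⧸ J) := hfin _
  have i2 : Module.Finite κ (R ⧸ J.frobeniusPower (p ^ e)) := by rw [hJJ]; exact hfin _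
  have g1 := card_le_colength_frobenius p e J (N.mono (p ^ e)) (κ := κ)
    (N.c_mul_eq_zero_of_sum p e hc hD) (N.exists_sum_eq p e hD)
    (by rwa [bad, map_mul] at hbad)
  have hcard : Fintype.card (Fin n → Fin (p ^ e)) = p ^ (e * n) := by simp [pow_mul]
  rw [hcard, hJJ] at g1
  exact g1

end Uniform

end NData

end SpreadHK

namespace SpreadHK

open Topology in
/-- Uniform estimates on a Hilbert–Kunz function `ℓ` of a fiber of dimension `n` bound the distance
of its `m`-th normalized value to its limit.  For `n < d` both are small, for `n > d` there is no
limit. -/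
lemma abs_sub_le_of_uniform (ℓ : ℕ → ℕ) (p n d m : ℕ) (hp : 2 ≤ p) (hm : 1 ≤ m) (C : ℝ)
    (h1 : ∀ f, (ℓ f : ℝ) ≤ C * (p : ℝ) ^ (f * n))
    (h2 : ∀ e f, |(p : ℝ) ^ f * ℓ (e + f) - (p : ℝ) ^ f * ((p : ℝ) ^ (e * n) * ℓ f)| ≤
      C * ((p : ℝ) ^ (e * n) * (p : ℝ) ^ (f * n)))
    (h3 : ∃ f, ∀ e, p ^ (e * n) ≤ ℓ (e + f)) (L : ℝ)
    (hL : Tendsto (fun N : ℕ => (ℓ N : ℝ) / (p : ℝ) ^ (N * d)) atTop (𝓝 L)) :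
    |(ℓ m : ℝ) / (p : ℝ) ^ (m * d) - L| ≤ C / p := by
  have hp' : (2 : ℝ) ≤ p := by exact_mod_cast hp
  have hp1 : (1 : ℝ) ≤ p := by linarith
  have hp0 : (0 : ℝ) < p := by linarith
  have hC : 0 ≤ C := by
    have := h1 0
    simp only [zero_mul, pow_zero, mul_one] at this
    exact (Nat.cast_nonneg _).trans this
  have hpow : ∀ k, 1 ≤ k → C / (p : ℝ) ^ k ≤ C / p := by
    intro k hk
    gcongr
    calc (p : ℝ) = (p : ℝ) ^ 1 := (pow_one _).symm
      _ ≤ (p : ℝ) ^ k := pow_le_pow_right₀ hp1 hk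
  rcases lt_trichotomy n d with hnd | rfl | hnd
  · have hb : ∀ N, (ℓ N : ℝ) / (p : ℝ) ^ (N * d) ≤ C / (p : ℝ) ^ N := by
      intro N
      rw [div_le_div_iff₀ (by positivity) (by positivity)]
      calc (ℓ N : ℝ) * (p : ℝ) ^ N ≤ C * (p : ℝ) ^ (N * n) * (p : ℝ) ^ N := by
            gcongr; exact h1 N
        _ = C * (p : ℝ) ^ (N * (n + 1)) := by rw [mul_assoc, ← pow_add]; ring_nf
        _ ≤ C * (p : ℝ) ^ (N * d) := by
            gcongr
            exact hnd
    have hlim : Tendsto (fun N : ℕ => C / (p : ℝ) ^ N) atTop (𝓝 0) := by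
      refine Tendsto.div_atTop tendsto_const_nhds (tendsto_pow_atTop_atTop_of_one_lt (by linarith))
    have hL0 : L = 0 := tendsto_nhds_unique hL
      (squeeze_zero (fun N => by positivity) hb hlim)
    rw [hL0, sub_zero, abs_of_nonneg (by positivity)]
    exact (hb m).trans (hpow m hm)
  · have hb : ∀ e, |(ℓ m : ℝ) / (p : ℝ) ^ (m * n) - (ℓ (e + m) : ℝ) / (p : ℝ) ^ ((e + m) * n)| ≤
        C / p := by
      intro e
      refine le_trans ?_ (hpow m hm)
      have h := h2 e m
      rw [abs_sub_comm] at h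
      have e1 : (ℓ m : ℝ) / (p : ℝ) ^ (m * n) - (ℓ (e + m) : ℝ) / (p : ℝ) ^ ((e + m) * n) =
          ((p : ℝ) ^ m * ((p : ℝ) ^ (e * n) * ℓ m) - (p : ℝ) ^ m * ℓ (e + m)) /
            ((p : ℝ) ^ m * ((p : ℝ) ^ (e * n) * (p : ℝ) ^ (m * n))) := by
        rw [add_mul, pow_add]
        field_simp
      rw [e1, abs_div, abs_of_pos (a := (p : ℝ) ^ m * _) (by positivity),
        div_le_div_iff₀ (by positivity) (by positivity)]
      calc _ ≤ C * ((p : ℝ) ^ (e * n) * (p : ℝ) ^ (m * n)) * (p : ℝ) ^ m := by gcongr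
        _ = _ := by ring
    have hL' := hL.comp (tendsto_add_atTop_nat m)
    refine le_of_tendsto ((tendsto_const_nhds.sub hL').abs) (Eventually.of_forall hb)
  · exfalso
    obtain ⟨f, hf⟩ := h3
    have hL' := (hL.comp (tendsto_add_atTop_nat f)).mul_const ((p : ℝ) ^ (f * d))
    refine not_tendsto_nhds_of_tendsto_atTop ?_ _ hL'
    refine tendsto_atTop_mono (fun e => ?_)
      (tendsto_pow_atTop_atTop_of_one_lt (by linarith : (1 : ℝ) < p))
    have h := hf e
    have h' : (p : ℝ) ^ (e * n) ≤ ℓ (e + f) := by exact_mod_cast h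
    simp only [Function.comp]
    rw [div_mul_eq_mul_div, le_div_iff₀ (by positivity)]
    calc (p : ℝ) ^ e * (p : ℝ) ^ ((e + f) * d) = (p : ℝ) ^ (e * (d + 1)) * (p : ℝ) ^ (f * d) := by
          rw [← pow_add, ← pow_add]; ring_nf
      _ ≤ (p : ℝ) ^ (e * n) * (p : ℝ) ^ (f * d) := by
          gcongr
          exact hnd
      _ ≤ _ := by gcongr

namespace NData

open MvPolynomial Topology

variable {κ R : Type*} [Field κ] [CommRing R] [Algebra κ R] {n r' r : ℕ} (N : NData κ R n r' r)
  (p : ℕ) [ExpChar κ p] [ExpChar R p] [PerfectRing κ p]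

/-- The constant governing the rate of convergence; it depends only on numerical invariants that do
not change in a family. -/
def convConst (n r' d δ : ℕ) : ℕ :=
  r' * d ^ n + r' * (δ * d ^ n) + r' * (r' * (δ * d ^ n))

/-- The normalized colength at `p ^ m` differs from the limit by at most a constant over `p`, and the
constant is governed by numerical data that are constant in a family. -/
lemma abs_sub_le (hp : 2 ≤ p) (hc : N.c ≠ 0) (hD : N.D ≠ 0) (I : Ideal R) (h : Fin n → Polynomial κ)
    (h0 : ∀ i, h i ≠ 0) (hI : ∀ i, Polynomial.aeval (N.x i) (h i) ∈ I) {d δ : ℕ} (hd0 : 0 < d)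
    (hd : ∀ i, (h i).natDegree ≤ d) (hδ : N.bad.totalDegree ≤ δ) {j : ℕ}
    (hj : aeval N.x N.bad ∉ I ^ j) (dim m : ℕ) (hm : 1 ≤ m) (L : ℝ)
    (hL : Tendsto (fun k : ℕ =>
      (Module.finrank κ (R ⧸ I.frobeniusPower (p ^ k)) : ℝ) / (p : ℝ) ^ (k * dim)) atTop (𝓝 L)) :
    |(Module.finrank κ (R ⧸ I.frobeniusPower (p ^ m)) : ℝ) / (p : ℝ) ^ (m * dim) - L| ≤
      (convConst n r' d δ : ℝ) / p := by
  refine abs_sub_le_of_uniform (N.hk p I) p n dim m hp hm _ ?_ ?_ ⟨j, fun e => ?_⟩ L hL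
  · intro f
    have := (N.finrank_frobeniusPower_le I h h0 hI hd (p ^ f)).2
    have h2 : N.hk p I f ≤ convConst n r' d δ * p ^ (f * n) := by
      refine this.trans ?_
      rw [mul_pow, ← mul_assoc, ← pow_mul]
      refine Nat.mul_le_mul_right _ ?_
      unfold convConst
      omega
    exact_mod_cast h2
  · intro e f
    obtain ⟨g1, g2⟩ := N.hk_compare p hc hD I h h0 hI hd0 hd hδ e f
    have c1 : r' * (δ * d ^ n) ≤ convConst n r' d δ := by unfold convConst; omega
    have c2 : r' * (r' * (δ * d ^ n)) ≤ convConst n r' d δ := by unfold convConst; omega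
    have g1' := g1.trans (Nat.add_le_add_left (Nat.mul_le_mul_right _ c1) _)
    have g2' := g2.trans (Nat.add_le_add_left (Nat.mul_le_mul_right _ c2) _)
    have g1'' : (p : ℝ) ^ f * ((p : ℝ) ^ (e * n) * N.hk p I f) ≤ (p : ℝ) ^ f * N.hk p I (e + f) +
      (convConst n r' d δ : ℝ) * ((p : ℝ) ^ (e * n) * (p : ℝ) ^ (f * n)) := by exact_mod_cast g1'
    have g2'' : (p : ℝ) ^ f * N.hk p I (e + f) ≤ (p : ℝ) ^ f * ((p : ℝ) ^ (e * n) * N.hk p I f) +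
      (convConst n r' d δ : ℝ) * ((p : ℝ) ^ (e * n) * (p : ℝ) ^ (f * n)) := by exact_mod_cast g2'
    rw [abs_le]
    constructor <;> linarith
  · refine N.pow_le_hk p hc hD I h h0 hI e j fun hmem => hj ?_
    exact Ideal.pow_le_pow_right (Nat.lt_pow_self hp).le (frobeniusPower_le_pow _ _ hmem)

end NData

end SpreadHK

namespace SpreadHK

open MvPolynomial TensorProduct

/-! ### Base change -/

section BaseChange

variable {A S : Type*} [CommRing A] [CommRing S] [Algebra A S] (κ : Type*) [CommRing κ]
  [Algebra A κ]

lemma aeval_one_tmul {n : ℕ} (x : Fin n → S) (a : MvPolynomial (Fin n) A) :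
    aeval (fun i => (1 : κ) ⊗ₜ[A] x i) (map (algebraMap A κ) a) = (1 : κ) ⊗ₜ[A] aeval x a := by
  rw [aeval_map_algebraMap]
  exact (comp_aeval_apply x (Algebra.TensorProduct.includeRight : S →ₐ[A] κ ⊗[A] S) a).symm

lemma eq_smul_map_monomial {n : ℕ} (d : Fin n →₀ ℕ) (t : κ) :
    monomial d t = t • map (algebraMap A κ) (monomial d (1 : A)) := by
  rw [map_monomial, map_one, smul_monomial, smul_eq_mul, mul_one]

namespace NData

variable {n r' r : ℕ} (N : NData A S n r' r)

/-- The base change of the coordinate map. -/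
noncomputable def πBase : κ ⊗[A] S →ₗ[κ] (Fin r → MvPolynomial (Fin n) κ) :=
  LinearMap.liftBaseChange κ
    ((LinearMap.compLeft (mapAlgHom (Algebra.ofId A κ)).toLinearMap (Fin r)).comp N.π)

lemma πBase_tmul (t : κ) (y : S) (i : Fin r) :
    N.πBase κ (t ⊗ₜ y) i = t • map (algebraMap A κ) (N.π y i) := by
  simp only [πBase, LinearMap.liftBaseChange_tmul]
  rfl

/-- Base change of the data along `A → κ`. -/
noncomputable def baseChange : NData κ (κ ⊗[A] S) n r' r where
  x i := 1 ⊗ₜ N.x i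
  u j := 1 ⊗ₜ N.u j
  u_spec y := by
    induction y with
    | zero => exact ⟨0, by simp⟩
    | tmul t y =>
      obtain ⟨a, ha⟩ := N.u_spec y
      refine ⟨fun j => t • map (algebraMap A κ) (a j), ?_⟩
      conv_lhs => rw [ha, tmul_sum]
      refine Finset.sum_congr rfl fun j _ => ?_
      rw [map_smul, aeval_one_tmul, smul_mul_assoc, Algebra.TensorProduct.tmul_mul_tmul,
        TensorProduct.smul_tmul', one_mul, smul_eq_mul, mul_one]
    | add y z hy hz =>
      obtain ⟨a, ha⟩ := hy
      obtain ⟨b, hb⟩ := hz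
      refine ⟨a + b, ?_⟩
      simp only [Pi.add_apply, map_add, add_mul, Finset.sum_add_distrib, ← ha, ← hb]
  e i := 1 ⊗ₜ N.e i
  π := N.πBase κ
  π_mul a y := by
    induction a using MvPolynomial.induction_on' with
    | monomial d t =>
      rw [eq_smul_map_monomial (A := A), map_smul, aeval_one_tmul, smul_mul_assoc, map_smul,
        smul_assoc]
      congr 1
      induction y with
      | zero => simp
      | tmul s y =>
        ext1 i
        rw [Algebra.TensorProduct.tmul_mul_tmul, one_mul, πBase_tmul, N.π_mul, Pi.smul_apply,
          Pi.smul_apply, πBase_tmul, smul_eq_mul, map_mul, smul_eq_mul, mul_smul_comm]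
      | add y z hy hz => rw [mul_add, map_add, hy, hz, map_add, smul_add]
    | add a b ha hb => rw [map_add, add_mul, map_add, ha, hb, add_smul]
  c := map (algebraMap A κ) N.c
  π_e i := by
    ext1 j
    rw [πBase_tmul, one_smul, N.π_e]
    by_cases h : j = i
    · subst h; simp
    · simp [h]
  c_mul y := by
    rw [aeval_one_tmul]
    induction y with
    | zero => simp
    | tmul t y =>
      rw [Algebra.TensorProduct.tmul_mul_tmul, one_mul, N.c_mul, tmul_sum]
      refine Finset.sum_congr rfl fun i _ => ?_
      rw [πBase_tmul, map_smul, aeval_one_tmul, smul_mul_assoc,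
        Algebra.TensorProduct.tmul_mul_tmul, TensorProduct.smul_tmul', one_mul, smul_eq_mul,
        mul_one]
    | add y z hy hz =>
      simp only [mul_add, hy, hz, map_add, Pi.add_apply, add_mul, Finset.sum_add_distrib]

lemma baseChange_D : (N.baseChange κ).D = map (algebraMap A κ) N.D := by
  rw [D, D, RingHom.map_det]
  congr 1
  ext1 i j
  simp only [RingHom.mapMatrix_apply, Matrix.map_apply, gram, τ, L, Matrix.of_apply, Matrix.trace,
    Matrix.diag_apply, map_sum]
  refine Finset.sum_congr rfl fun l _ => ?_
  have : (N.baseChange κ).e i * (N.baseChange κ).e j * (N.baseChange κ).e l =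
      (1 : κ) ⊗ₜ (N.e i * N.e j * N.e l) := by
    simp [baseChange, Algebra.TensorProduct.tmul_mul_tmul]
  rw [this]
  change N.πBase κ _ l = _
  rw [πBase_tmul, one_smul]

/-- The polynomial `bad` makes sense over any base. -/
noncomputable def badPoly : MvPolynomial (Fin n) A := N.c * (N.c ^ (2 * r + 1) * N.D)

end NData

end BaseChange

lemma NData.baseChange_bad {A S : Type*} [CommRing A] [CommRing S] [Algebra A S] (κ : Type*)
    [Field κ] [Algebra A κ] {n r' r : ℕ} (N : NData A S n r' r) :
    (N.baseChange κ).bad = map (algebraMap A κ) N.badPoly := by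
  rw [bad, E, baseChange_D, badPoly, map_mul, map_mul, map_pow]
  rfl

/-! ### Generic isomorphisms -/

/-- If `φ : M' → M` is injective with cokernel killed by powers of `a`, then it becomes bijective
after base change to a ring in which `a` is invertible. -/
lemma baseChange_bijective {A M M' : Type*} [CommRing A] [AddCommGroup M] [AddCommGroup M']
    [Module A M] [Module A M'] (φ : M' →ₗ[A] M) (hφ : Function.Injective φ) (a : A)
    (ha : ∀ y, ∃ (k : ℕ) (s : M'), φ s = a ^ k • y) (κ : Type*) [Field κ] [Algebra A κ]
    (haκ : algebraMap A κ a ≠ 0) : Function.Bijective (φ.baseChange κ) := by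
  set α := algebraMap A κ a
  have hmove : ∀ (k : ℕ) (t : κ) (s : M'), t ⊗ₜ[A] (a ^ k • s) = (t * α ^ k) ⊗ₜ[A] s := by
    intro k t s
    rw [← TensorProduct.smul_tmul, Algebra.smul_def, map_pow, mul_comm]
  have hmove' : ∀ (k : ℕ) (t : κ) (s : M), t ⊗ₜ[A] (a ^ k • s) = (t * α ^ k) ⊗ₜ[A] s := by
    intro k t s
    rw [← TensorProduct.smul_tmul, Algebra.smul_def, map_pow, mul_comm]
  constructor
  · -- the inverse sends `y` to `a ^ (-k) ⊗ s` if `φ s = a ^ k • y`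
    choose k s hs using ha
    let g₀ : M → κ ⊗[A] M' := fun y => (α ^ k y)⁻¹ ⊗ₜ s y
    have hg₀ : ∀ y l t, φ t = a ^ l • y → g₀ y = (α ^ l)⁻¹ ⊗ₜ t := by
      intro y l t ht
      have h1 : a ^ l • s y = a ^ k y • t := by
        apply hφ
        rw [map_smul, map_smul, hs, ht, smul_smul, smul_smul, mul_comm]
      have h2 := hmove l ((α ^ l)⁻¹ * (α ^ k y)⁻¹) (s y)
      have h3 := hmove (k y) ((α ^ l)⁻¹ * (α ^ k y)⁻¹) t
      rw [h1, h3] at h2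
      have e1 : (α ^ l)⁻¹ * (α ^ k y)⁻¹ * α ^ k y = (α ^ l)⁻¹ := by field_simp
      have e2 : (α ^ l)⁻¹ * (α ^ k y)⁻¹ * α ^ l = (α ^ k y)⁻¹ := by field_simp
      rw [e1, e2] at h2
      exact h2.symm
    let g : M →ₗ[A] κ ⊗[A] M' :=
      { toFun := g₀
        map_add' := by
          intro y z
          rw [hg₀ (y + z) (k y + k z) (a ^ k z • s y + a ^ k y • s z) (by
            rw [map_add, map_smul, map_smul, hs, hs, smul_add, smul_smul, smul_smul]
            ring_nf), tmul_add, hmove, hmove]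
          simp only [g₀]
          congr 2 <;> (rw [pow_add]; field_simp)
        map_smul' := by
          intro b y
          rw [hg₀ (b • y) (k y) (b • s y) (by rw [map_smul, hs, smul_comm]), tmul_smul]
          rfl }
    have hg : (LinearMap.liftBaseChange κ g).comp (φ.baseChange κ) = LinearMap.id := by
      ext t
      simp only [LinearMap.comp_apply, AlgebraTensorModule.curry_apply, curry_apply,
        LinearMap.coe_restrictScalars, LinearMap.baseChange_tmul,
        LinearMap.liftBaseChange_tmul, one_smul, LinearMap.id_coe, id_eq]
      change g₀ (φ t) = _
      rw [hg₀ (φ t) 0 t (by simp)]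
      simp
    intro y z hyz
    have := congrArg (LinearMap.liftBaseChange κ g) hyz
    rw [← LinearMap.comp_apply, ← LinearMap.comp_apply, hg] at this
    exact this
  · intro z
    induction z with
    | zero => exact ⟨0, map_zero _⟩
    | tmul t y =>
      obtain ⟨k, s, hs⟩ := ha y
      refine ⟨(t * (α ^ k)⁻¹) ⊗ₜ s, ?_⟩
      rw [LinearMap.baseChange_tmul, hs, hmove']
      congr 1
      field_simp
    | add y z hy hz =>
      obtain ⟨y, rfl⟩ := hy
      obtain ⟨z, rfl⟩ := hz
      exact ⟨y + z, map_add _ _ _⟩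

/-! ### Clearing denominators -/

/-- A linear map from a finite module to vectors over the fraction field becomes integral after
multiplication by a nonzero scalar. -/
lemma exists_clear {P F M : Type*} [CommRing P] [IsDomain P] [Field F] [Algebra P F]
    [IsFractionRing P F] [AddCommGroup M] [Module P M] [Module.Finite P M] {r : ℕ}
    (f : M →ₗ[P] (Fin r → F)) :
    ∃ c : P, c ≠ 0 ∧ ∃ f' : M →ₗ[P] (Fin r → P), ∀ m i, algebraMap P F (f' m i) = c • f m i := by
  classical
  obtain ⟨T, hT⟩ := (Module.Finite.fg_top : (⊤ : Submodule P M).FG)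
  obtain ⟨b, hb⟩ := IsLocalization.exist_integer_multiples_of_finset (nonZeroDivisors P)
    ((T ×ˢ (Finset.univ : Finset (Fin r))).image fun mi => f mi.1 mi.2)
  have hinj : Function.Injective (Algebra.linearMap P F) := IsFractionRing.injective P F
  have hmem : ∀ (i : Fin r) (m : M), (((b : P) • (LinearMap.proj i).comp f) : M →ₗ[P] F) m ∈
      LinearMap.range (Algebra.linearMap P F) := by
    intro i m
    have hm : m ∈ Submodule.span P (T : Set M) := by rw [hT]; trivial
    have hle : Submodule.span P (T : Set M) ≤ (LinearMap.range (Algebra.linearMap P F)).comap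
        (((b : P) • (LinearMap.proj i).comp f) : M →ₗ[P] F) := by
      rw [Submodule.span_le]
      intro m hm
      obtain ⟨a, ha⟩ := hb (f m i) (Finset.mem_image.2 ⟨(m, i), by simpa using hm, rfl⟩)
      exact ⟨a, ha⟩
    exact hle hm
  refine ⟨b, nonZeroDivisors.coe_ne_zero b, LinearMap.pi fun i =>
    (LinearEquiv.ofInjective _ hinj).symm.toLinearMap.comp
      (LinearMap.codRestrict _ _ (hmem i)), ?_⟩
  intro m i
  have := LinearEquiv.apply_symm_apply (LinearEquiv.ofInjective _ hinj)
    (LinearMap.codRestrict _ _ (hmem i) m)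
  exact congrArg Subtype.val this

end SpreadHK

namespace SpreadHK

open MvPolynomial TensorProduct

/-! ### Finite extensions of domains of characteristic zero -/

section FractionBasis

attribute [local instance] FractionRing.liftAlgebra

/-- A finite extension `P ⊆ S` of domains of characteristic `0` is generically free with nonzero
discriminant: a basis of the fraction field of `S` contained in `S` can be used. -/
lemma exists_generic_basis {P S : Type*} [CommRing P] [IsDomain P] [CharZero P] [CommRing S]
    [IsDomain S] [Algebra P S] [Module.IsTorsionFree P S] [Module.Finite P S] :
    ∃ (r : ℕ) (e : Fin r → S) (c : P) (π : S →ₗ[P] (Fin r → P)), c ≠ 0 ∧ 0 < r ∧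
      (∀ i, π (e i) = Pi.single i c) ∧ (∀ y, c • y = ∑ i, π y i • e i) ∧
      (Matrix.of fun i j => Matrix.trace
        (Matrix.of fun a b => π (e i * e j * e b) a)).det ≠ 0 := by
  classical
  let F := FractionRing P
  let L := FractionRing S
  have : CharZero F := charZero_of_injective_algebraMap (IsFractionRing.injective P F)
  have hspan : (⊤ : Submodule F L) ≤ Submodule.span F (algebraMap S L '' Set.univ) := by
    rw [span_eq_top_localization_localization F (nonZeroDivisors P) L (v := Set.univ)]
    exact Submodule.span_univ
  let b₀ := Module.Basis.ofSpan hspan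
  have := Module.Finite.finite_basis b₀
  have := Fintype.ofFinite ↑((linearIndepOn_empty F id).extend
    (Set.empty_subset (algebraMap S L '' Set.univ)))
  let r := Fintype.card ↑((linearIndepOn_empty F id).extend
    (Set.empty_subset (algebraMap S L '' Set.univ)))
  let b : Module.Basis (Fin r) F L := b₀.reindex (Fintype.equivFin _)
  have hb : ∀ i, ∃ s : S, algebraMap S L s = b i := by
    intro i
    obtain ⟨s, -, hs⟩ := Module.Basis.ofSpan_subset hspan
      ⟨(Fintype.equivFin _).symm i, rfl⟩
    exact ⟨s, by rw [hs, Module.Basis.reindex_apply]⟩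
  choose e he using hb
  have hinjS : Function.Injective (algebraMap S L) := IsFractionRing.injective S L
  have hinjP : Function.Injective (algebraMap P F) := IsFractionRing.injective P F
  let f : S →ₗ[P] (Fin r → F) :=
    (b.equivFun.toLinearMap.restrictScalars P).comp (IsScalarTower.toAlgHom P S L).toLinearMap
  have hf : ∀ y, f y = b.equivFun (algebraMap S L y) := fun y => rfl
  obtain ⟨c, hc, π, hπ⟩ := exists_clear f
  refine ⟨r, e, c, π, hc, ?_, ?_, ?_, ?_⟩
  · rw [Fin.pos_iff_nonempty]
    exact b.index_nonempty
  · intro i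
    ext1 j
    apply hinjP
    rw [hπ, hf, he, Module.Basis.equivFun_self]
    by_cases h : i = j
    · subst h; simp [Algebra.smul_def]
    · simp [h, Ne.symm h]
  · intro y
    apply hinjS
    rw [map_sum, Algebra.smul_def, map_mul, ← IsScalarTower.algebraMap_apply P S L,
      IsScalarTower.algebraMap_apply P F L, ← Algebra.smul_def]
    conv_lhs => rw [← b.sum_equivFun (algebraMap S L y), Finset.smul_sum]
    refine Finset.sum_congr rfl fun i _ => ?_
    rw [Algebra.smul_def (π y i), map_mul, ← IsScalarTower.algebraMap_apply P S L,
      IsScalarTower.algebraMap_apply P F L, hπ, hf, he, smul_smul, ← Algebra.smul_def,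
      Algebra.smul_def c]
    rfl
  · intro h0
    have h1 := congrArg (algebraMap P F) h0
    rw [map_zero, RingHom.map_det] at h1
    have h2 : (algebraMap P F).mapMatrix (Matrix.of fun i j => Matrix.trace
        (Matrix.of fun a b => π (e i * e j * e b) a)) =
        algebraMap P F c • Algebra.traceMatrix F b := by
      ext1 i j
      rw [RingHom.mapMatrix_apply, Matrix.map_apply, Matrix.of_apply, Matrix.smul_apply,
        Algebra.traceMatrix_apply, Algebra.traceForm_apply, Algebra.trace_eq_matrix_trace b,
        Matrix.trace, Matrix.trace, map_sum, Finset.smul_sum]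
      refine Finset.sum_congr rfl fun l _ => ?_
      rw [Matrix.diag_apply, Matrix.diag_apply, Matrix.of_apply, hπ, hf,
        Algebra.leftMulMatrix_eq_repr_mul, map_mul (algebraMap S L), map_mul (algebraMap S L), he, he,
        he, Algebra.smul_def]
      rfl
    rw [h2, Matrix.det_smul, mul_eq_zero] at h1
    rcases h1 with h1 | h1
    · exact pow_ne_zero _ (by rwa [Ne, map_eq_zero_iff _ hinjP]) h1
    · exact Algebra.discr_not_zero_of_basis F b h1

end FractionBasis

lemma exists_nData {A S : Type*} [CommRing A] [IsDomain A] [CharZero A] [CommRing S] [IsDomain S]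
    [Algebra A S] {n : ℕ} (x : Fin n → S)
    (hinj : Function.Injective (aeval x : MvPolynomial (Fin n) A →ₐ[A] S))
    (hfin : (aeval x : MvPolynomial (Fin n) A →ₐ[A] S).toRingHom.Finite) :
    ∃ (r' r : ℕ) (N : NData A S n r' r), N.x = x ∧ N.c ≠ 0 ∧ N.D ≠ 0 ∧ 0 < r := by
  let _ : Algebra (MvPolynomial (Fin n) A) S := (aeval x).toRingHom.toAlgebra
  have hmap : ∀ a : MvPolynomial (Fin n) A, algebraMap _ S a = aeval x a := fun a => rfl
  have : IsScalarTower A (MvPolynomial (Fin n) A) S := IsScalarTower.of_algebraMap_eq fun a => by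
    rw [hmap, MvPolynomial.algebraMap_eq, aeval_C]
  have : Module.Finite (MvPolynomial (Fin n) A) S := hfin
  have : FaithfulSMul (MvPolynomial (Fin n) A) S :=
    (faithfulSMul_iff_algebraMap_injective _ _).2 hinj
  obtain ⟨r, e, c, π, hc, hr, hπe, hcm, hD⟩ :=
    exists_generic_basis (P := MvPolynomial (Fin n) A) (S := S)
  obtain ⟨r', u, hu⟩ := Module.Finite.exists_fin (R := MvPolynomial (Fin n) A) (M := S)
  refine ⟨r', r,
    { x := x
      u := u
      u_spec := fun y => ?_
      e := e
      π := π.restrictScalars A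
      π_mul := fun a y => ?_
      c := c
      π_e := hπe
      c_mul := fun y => ?_ }, rfl, hc, hD, hr⟩
  · have hy : y ∈ Submodule.span (MvPolynomial (Fin n) A) (Set.range u) := by rw [hu]; trivial
    obtain ⟨a, ha⟩ := (Submodule.mem_span_range_iff_exists_fun _).1 hy
    exact ⟨a, by rw [← ha]; exact Finset.sum_congr rfl fun j _ => Algebra.smul_def _ _⟩
  · rw [LinearMap.coe_restrictScalars, ← hmap, ← Algebra.smul_def, map_smul]
  · have := hcm y
    rw [Algebra.smul_def, hmap] at this
    rw [this]
    exact Finset.sum_congr rfl fun j _ => Algebra.smul_def _ _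

end SpreadHK

namespace SpreadHK

open MvPolynomial TensorProduct

/-! ### Noether normalization over a dense open subset of the base -/

lemma exists_pow_smul_mem {A S : Type*} [CommRing A] [CommRing S] [Algebra A S] {T : Set S}
    (hT : Algebra.adjoin A T = ⊤) (S' : Subalgebra A S) (a : A) (h : ∀ t ∈ T, a • t ∈ S') (y : S) :
    ∃ k : ℕ, a ^ k • y ∈ S' := by
  have hy : y ∈ Algebra.adjoin A T := by rw [hT]; trivial
  induction hy using Algebra.adjoin_induction with
  | mem t ht => exact ⟨1, by rw [pow_one]; exact h t ht⟩
  | algebraMap b => exact ⟨0, by rw [pow_zero, one_smul]; exact S'.algebraMap_mem b⟩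
  | add y z _ _ hy hz =>
    obtain ⟨k, hk⟩ := hy
    obtain ⟨l, hl⟩ := hz
    refine ⟨k + l, ?_⟩
    have := add_mem (S'.smul_mem hk (a ^ l)) (S'.smul_mem hl (a ^ k))
    rwa [smul_smul, smul_smul, ← pow_add, ← pow_add, add_comm l k, ← smul_add] at this
  | mul y z _ _ hy hz =>
    obtain ⟨k, hk⟩ := hy
    obtain ⟨l, hl⟩ := hz
    refine ⟨k + l, ?_⟩
    have := mul_mem hk hl
    rwa [smul_mul_smul_comm, ← pow_add] at this

lemma isIntegralElem_comp {P B L : Type*} [CommRing P] [CommRing B] [CommRing L] (f : P →+* B)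
    (v : B →+* L) {b : B} (h : f.IsIntegralElem b) : (v.comp f).IsIntegralElem (v b) := by
  obtain ⟨q, hq, hq0⟩ := h
  exact ⟨q, hq, by rw [← Polynomial.hom_eval₂, hq0, map_zero]⟩

section Normalization

attribute [local instance] FractionRing.liftAlgebra algebraMvPolynomial

/-- Noether normalization of the generic fiber, with denominators in `A` cleared. -/
lemma exists_generic_normalization {A S : Type*} [CommRing A] [IsDomain A] [CommRing S]
    [IsDomain S] [Algebra A S] [Module.IsTorsionFree A S] {T : Set S} (hTfin : T.Finite) :
    ∃ (a : A) (n : ℕ) (x : Fin n → S), a ≠ 0 ∧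
      Function.Injective (aeval x : MvPolynomial (Fin n) A →ₐ[A] S) ∧
      ∀ t ∈ T, (aeval x : MvPolynomial (Fin n) A →ₐ[A] S).toRingHom.IsIntegralElem (a • t) := by
  classical
  let K := FractionRing A
  let L := FractionRing S
  have hinjS : Function.Injective (algebraMap S L) := IsFractionRing.injective S L
  have hinjA : Function.Injective (algebraMap A K) := IsFractionRing.injective A K
  have hsmul : ∀ (b : A) (s : S), algebraMap S L (b • s) = b • algebraMap S L s := fun b s =>
    map_smul (IsScalarTower.toAlgHom A S L) b s
  let SK : Subalgebra K L := Algebra.adjoin K (algebraMap S L '' T)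
  have hSKfg : Algebra.FiniteType K SK :=
    Algebra.FiniteType.adjoin_of_finite (hTfin.image _)
  have hclear : ∀ y ∈ SK, ∃ b : A, b ≠ 0 ∧ ∃ s : S, b • y = algebraMap S L s := by
    intro y hy
    induction hy using Algebra.adjoin_induction with
    | mem t ht =>
      obtain ⟨s, -, rfl⟩ := ht
      exact ⟨1, one_ne_zero, s, one_smul _ _⟩
    | algebraMap z =>
      obtain ⟨⟨u, v⟩, huv⟩ := IsLocalization.surj (nonZeroDivisors A) z
      refine ⟨v, nonZeroDivisors.coe_ne_zero v, algebraMap A S u, ?_⟩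
      rw [← IsScalarTower.algebraMap_apply A S L, IsScalarTower.algebraMap_apply A K L, ← huv,
        map_mul, Algebra.smul_def, IsScalarTower.algebraMap_apply A K L, mul_comm]
    | add y z _ _ hy hz =>
      obtain ⟨b, hb, s, hs⟩ := hy
      obtain ⟨b', hb', s', hs'⟩ := hz
      refine ⟨b * b', mul_ne_zero hb hb', b' • s + b • s', ?_⟩
      rw [map_add, hsmul, hsmul, ← hs, ← hs', smul_smul,
        smul_smul, smul_add, mul_comm b' b]
    | mul y z _ _ hy hz =>
      obtain ⟨b, hb, s, hs⟩ := hy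
      obtain ⟨b', hb', s', hs'⟩ := hz
      exact ⟨b * b', mul_ne_zero hb hb', s * s', by rw [map_mul, ← hs, ← hs', smul_mul_smul_comm]⟩
  obtain ⟨n, g, hginj, hgfin⟩ := exists_finite_inj_algHom_of_fg K SK
  choose b hb x hx using fun i => hclear (g (X i)) (g (X i)).2
  have hbK : ∀ i, algebraMap A K (b i) ≠ 0 := fun i => by rw [Ne, map_eq_zero_iff _ hinjA]; exact hb i
  -- rescale the variables so that they map to `S`
  let ψ : MvPolynomial (Fin n) K ≃ₐ[K] MvPolynomial (Fin n) K := AlgEquiv.ofAlgHom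
    (aeval fun i => C (algebraMap A K (b i)) * X i)
    (aeval fun i => C (algebraMap A K (b i))⁻¹ * X i)
    (by
      ext1 i
      simp only [AlgHom.comp_apply, aeval_X, map_mul, algHom_C, algebraMap_eq, AlgHom.id_apply]
      rw [← mul_assoc, ← C_mul, inv_mul_cancel₀ (hbK i), C_1, one_mul])
    (by
      ext1 i
      simp only [AlgHom.comp_apply, aeval_X, map_mul, algHom_C, algebraMap_eq, AlgHom.id_apply]
      rw [← mul_assoc, ← C_mul, mul_inv_cancel₀ (hbK i), C_1, one_mul])
  let G : MvPolynomial (Fin n) K →ₐ[K] L := SK.val.comp (g.comp ψ.toAlgHom)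
  have hG : G = aeval fun i => algebraMap S L (x i) := by
    ext1 i
    rw [aeval_X, ← hx]
    simp only [G, ψ, AlgHom.comp_apply, AlgEquiv.toAlgHom_ofAlgHom,
      aeval_X, map_mul, algHom_C]
    rw [Algebra.smul_def, IsScalarTower.algebraMap_apply A K L]
    rfl
  have hGinj : Function.Injective G :=
    Subtype.val_injective.comp (hginj.comp ψ.injective)
  have hcomp : ∀ q : MvPolynomial (Fin n) A, algebraMap S L (aeval x q) =
      G (map (algebraMap A K) q) := by
    intro q
    rw [hG, aeval_map_algebraMap]
    exact comp_aeval_apply x (IsScalarTower.toAlgHom A S L) q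
  let _ : Algebra (MvPolynomial (Fin n) A) S := (aeval x).toRingHom.toAlgebra
  let _ : Algebra (MvPolynomial (Fin n) K) L := G.toRingHom.toAlgebra
  have : IsScalarTower (MvPolynomial (Fin n) A) (MvPolynomial (Fin n) K) L :=
    IsScalarTower.of_algebraMap_eq fun q => by
      rw [IsScalarTower.algebraMap_apply (MvPolynomial (Fin n) A) S L]
      exact hcomp q
  have hintegral : ∀ t ∈ T, ∃ c : A, c ≠ 0 ∧ IsIntegral (MvPolynomial (Fin n) A) (c • t) := by
    intro t ht
    have h1 : IsIntegral (MvPolynomial (Fin n) K) (algebraMap S L t) := by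
      have hmem : algebraMap S L t ∈ SK := Algebra.subset_adjoin ⟨t, ht, rfl⟩
      have hfin : (g.comp ψ.toAlgHom).toRingHom.Finite :=
        RingHom.Finite.comp hgfin (RingHom.Finite.of_surjective _ ψ.surjective)
      exact isIntegralElem_comp _ SK.val.toRingHom
        (hfin.to_isIntegral ⟨algebraMap S L t, hmem⟩)
    obtain ⟨⟨_, c, hc, rfl⟩, hm⟩ := h1.exists_multiple_integral_of_isLocalization
      ((nonZeroDivisors A).map (C (σ := Fin n)))
    refine ⟨c, nonZeroDivisors.ne_zero hc, ?_⟩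
    rw [← isIntegral_algebraMap_iff (B := L) hinjS]
    convert! hm using 1
    rw [Submonoid.smul_def, Algebra.smul_def, Algebra.smul_def, map_mul]
    congr 1
    rw [IsScalarTower.algebraMap_apply (MvPolynomial (Fin n) A) S L]
    exact congrArg _ (aeval_C x c).symm
  choose! c hc0 hc using hintegral
  refine ⟨∏ t ∈ hTfin.toFinset, c t, n, x, ?_, ?_, ?_⟩
  · exact Finset.prod_ne_zero_iff.2 fun t ht => hc0 t (hTfin.mem_toFinset.1 ht)
  · intro q q' h
    have := congrArg (algebraMap S L) h
    rw [hcomp, hcomp] at this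
    exact map_injective _ hinjA (hGinj this)
  · intro t ht
    rw [← Finset.prod_erase_mul _ _ (hTfin.mem_toFinset.2 ht), mul_smul]
    have : IsIntegral (MvPolynomial (Fin n) A)
        (algebraMap (MvPolynomial (Fin n) A) S (C (∏ t ∈ hTfin.toFinset.erase t, c t)) * c t • t) :=
      isIntegral_algebraMap.mul (hc t ht)
    rwa [show algebraMap (MvPolynomial (Fin n) A) S (C (∏ t ∈ hTfin.toFinset.erase t, c t)) =
      algebraMap A S _ from aeval_C x _, ← Algebra.smul_def] at this

end Normalization

/-- A subalgebra finite over a polynomial ring carries normalization data. -/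
lemma exists_nData_adjoin {A S : Type*} [CommRing A] [IsDomain A] [CharZero A] [CommRing S]
    [IsDomain S] [Algebra A S] {n : ℕ} (x : Fin n → S)
    (hinj : Function.Injective (aeval x : MvPolynomial (Fin n) A →ₐ[A] S))
    {W : Set S} (hW : W.Finite)
    (hintegral : ∀ t ∈ W, (aeval x : MvPolynomial (Fin n) A →ₐ[A] S).toRingHom.IsIntegralElem t) :
    ∃ (S' : Subalgebra A S) (r' r : ℕ) (N : NData A S' n r' r), N.c ≠ 0 ∧ N.D ≠ 0 ∧ 0 < r ∧
      W ⊆ S' := by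
  let _ : Algebra (MvPolynomial (Fin n) A) S := (aeval x).toRingHom.toAlgebra
  have hmap : ∀ a : MvPolynomial (Fin n) A, algebraMap _ S a = aeval x a := fun a => rfl
  have : IsScalarTower A (MvPolynomial (Fin n) A) S := IsScalarTower.of_algebraMap_eq fun a => by
    rw [hmap, MvPolynomial.algebraMap_eq, aeval_C]
  have hfin : Module.Finite (MvPolynomial (Fin n) A) (Algebra.adjoin (MvPolynomial (Fin n) A) W) :=
    Algebra.finite_adjoin_of_finite_of_isIntegral hW hintegral
  obtain ⟨S₁, hS₁⟩ : ∃ S₁, S₁ = Algebra.adjoin (MvPolynomial (Fin n) A) W := ⟨_, rfl⟩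
  rw [← hS₁] at hfin
  have hx : ∀ i, x i ∈ S₁.restrictScalars A := by
    intro i
    have := S₁.algebraMap_mem (X i)
    rwa [hmap, aeval_X] at this
  obtain ⟨x', hx'⟩ : ∃ x' : Fin n → S₁.restrictScalars A, ∀ i, (x' i : S) = x i :=
    ⟨fun i => ⟨x i, hx i⟩, fun i => rfl⟩
  have hval : ∀ q : MvPolynomial (Fin n) A,
      ((aeval x' q : S₁.restrictScalars A) : S) = aeval x q := fun q => by
    rw [← funext hx']
    exact comp_aeval_apply x' (S₁.restrictScalars A).val q
  have hinj' : Function.Injective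
      (aeval x' : MvPolynomial (Fin n) A →ₐ[A] S₁.restrictScalars A) := fun q q' h =>
    hinj (by rw [← hval, ← hval, h])
  have hfin' : (aeval x' : MvPolynomial (Fin n) A →ₐ[A] S₁.restrictScalars A).toRingHom.Finite := by
    let e : S₁ →+* S₁.restrictScalars A :=
      { toFun := fun y => ⟨y.1, y.2⟩
        map_one' := rfl
        map_mul' := fun _ _ => rfl
        map_zero' := rfl
        map_add' := fun _ _ => rfl }
    have he : (aeval x' : MvPolynomial (Fin n) A →ₐ[A] S₁.restrictScalars A).toRingHom =
        e.comp (algebraMap (MvPolynomial (Fin n) A) S₁) :=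
      RingHom.ext fun q => Subtype.ext (hval q)
    rw [he]
    refine RingHom.Finite.comp (RingHom.Finite.of_surjective e fun y => ⟨⟨y.1, y.2⟩, rfl⟩) ?_
    exact RingHom.finite_algebraMap.2 hfin
  obtain ⟨r', r, N, -, hc, hD, hr⟩ := exists_nData x' hinj' hfin'
  refine ⟨S₁.restrictScalars A, r', r, N, hc, hD, hr, fun t ht => ?_⟩
  have h : t ∈ Algebra.adjoin (MvPolynomial (Fin n) A) W := Algebra.subset_adjoin ht
  rw [← hS₁] at h
  exact h

/-- Over a dense open subset of the base, a domain of finite type is a generically free algebra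
over a polynomial ring with nonzero discriminant. -/
lemma exists_spread (A S : Type*) [CommRing A] [IsDomain A] [CharZero A] [CommRing S]
    [IsDomain S] [Algebra A S] [Module.IsTorsionFree A S] [Algebra.FiniteType A S] :
    ∃ (a : A) (S' : Subalgebra A S) (n r' r : ℕ) (N : NData A S' n r' r), a ≠ 0 ∧
      N.c ≠ 0 ∧ N.D ≠ 0 ∧ 0 < r ∧ ∀ y : S, ∃ k : ℕ, a ^ k • y ∈ S' := by
  obtain ⟨T, hT⟩ := (Algebra.FiniteType.out : (⊤ : Subalgebra A S).FG)
  obtain ⟨a, n, x, ha, hinj, hintegral⟩ := exists_generic_normalization (A := A) T.finite_toSet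
  obtain ⟨S', r', r, N, hc, hD, hr, hS'⟩ := exists_nData_adjoin x hinj
    (T.finite_toSet.image fun t => a • t) (by
      rintro _ ⟨t, ht, rfl⟩
      exact hintegral t ht)
  exact ⟨a, S', n, r', r, N, ha, hc, hD, hr,
    exists_pow_smul_mem hT S' a fun t ht => hS' ⟨t, ht, rfl⟩⟩

end SpreadHK

namespace SpreadHK

open MvPolynomial TensorProduct

universe u v w

/-! ### Spreading out ideals -/

/-- The extension of `I` to the fiber `κ ⊗ S`. -/
noncomputable abbrev fiberIdeal {A S : Type*} (κ : Type*) [CommRing A] [CommRing S] [Algebra A S]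
    [CommRing κ] [Algebra A κ] (I : Ideal S) : Ideal (κ ⊗[A] S) :=
  I.map (Algebra.TensorProduct.includeRight.toRingHom : S →+* κ ⊗[A] S)

lemma one_tmul_mem_fiberIdeal {A S κ : Type*} [CommRing A] [CommRing S] [Algebra A S]
    [CommRing κ] [Algebra A κ] {I : Ideal S} {y : S} (hy : y ∈ I) :
    (1 : κ) ⊗ₜ[A] y ∈ fiberIdeal (A := A) κ I :=
  Ideal.mem_map_of_mem (Algebra.TensorProduct.includeRight.toRingHom : S →+* κ ⊗[A] S) hy

lemma fiberIdeal_le_ker {A S κ : Type*} [CommRing A] [CommRing S] [Algebra A S]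
    [CommRing κ] [Algebra A κ] {I J : Ideal S} (hIJ : I ≤ J) :
    fiberIdeal (A := A) κ I ≤ RingHom.ker (Algebra.TensorProduct.map (AlgHom.id κ κ)
      (Ideal.Quotient.mkₐ A J)) := by
  rw [Ideal.map_le_iff_le_comap]
  intro y hy
  rw [Ideal.mem_comap, RingHom.mem_ker]
  change (1 : κ) ⊗ₜ[A] (Ideal.Quotient.mkₐ A J y) = 0
  rw [Ideal.Quotient.mkₐ_eq_mk, Ideal.Quotient.eq_zero_iff_mem.2 (hIJ hy), tmul_zero]

lemma NData.aeval_injective {A S : Type*} [CommRing A] [IsDomain A] [CommRing S] [Algebra A S]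
    {n r' r : ℕ} (N : NData A S n r' r) (hc : N.c ≠ 0) (hr : 0 < r) :
    Function.Injective (aeval N.x : MvPolynomial (Fin n) A →ₐ[A] S) := by
  rw [injective_iff_map_eq_zero]
  intro a ha
  have h := congrFun (N.π_mul a (N.e ⟨0, hr⟩)) ⟨0, hr⟩
  rw [ha, zero_mul, map_zero, N.π_e, Pi.smul_apply, Pi.single_eq_same, Pi.zero_apply,
    smul_eq_mul] at h
  exact (mul_eq_zero.1 h.symm).resolve_right hc

/-- A finite module element which is not `A`-torsion is detected by a functional. -/
lemma exists_functional {A M : Type*} [CommRing A] [IsDomain A] [AddCommGroup M] [Module A M]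
    [Module.Finite A M] (β : M) (hβ : ∀ b : A, b ≠ 0 → b • β ≠ 0) :
    ∃ χ : M →ₗ[A] A, χ β ≠ 0 := by
  let K := FractionRing A
  let ι := LocalizedModule.mkLinearMap (nonZeroDivisors A) M
  have h1 : ι β ≠ 0 := by
    rw [Ne, IsLocalizedModule.eq_zero_iff (nonZeroDivisors A) ι]
    rintro ⟨b, hb⟩
    exact hβ b (nonZeroDivisors.coe_ne_zero b) hb
  have h2 : ∃ f : Module.Dual K (LocalizedModule (nonZeroDivisors A) M), f (ι β) ≠ 0 := by
    by_contra! h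
    exact h1 ((Module.forall_dual_apply_eq_zero_iff K _).1 h)
  obtain ⟨f, hf⟩ := h2
  obtain ⟨c, hc, f', hf'⟩ := exists_clear (r := 1)
    (LinearMap.pi fun _ => (f.restrictScalars A).comp ι)
  refine ⟨(LinearMap.proj 0).comp f', fun h => ?_⟩
  have h3 := hf' β 0
  rw [show f' β 0 = 0 from h, map_zero] at h3
  exact smul_ne_zero hc hf h3.symm

/-- An element of an algebraic algebra of finite type which is not torsion over the base stays
nonzero in the fibers over a dense open subset. -/
lemma exists_tmul_ne_zero {A : Type u} {Q : Type v} [CommRing A] [IsDomain A] [CommRing Q]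
    [Algebra A Q] [Algebra.FiniteType A Q] (halg : ∀ y : Q, IsAlgebraic A y) (β : Q)
    (hβ : ∀ b : A, b ≠ 0 → b • β ≠ 0) :
    ∃ g : A, g ≠ 0 ∧ ∀ (κ : Type w) [Field κ] [Algebra A κ], algebraMap A κ g ≠ 0 →
      (1 : κ) ⊗ₜ[A] β ≠ 0 := by
  classical
  obtain ⟨T, hT⟩ := (Algebra.FiniteType.out : (⊤ : Subalgebra A Q).FG)
  choose c hc0 hc using fun t : Q => (halg t).exists_integral_multiple
  let a := ∏ t ∈ T, c t
  have ha : a ≠ 0 := Finset.prod_ne_zero_iff.2 fun t _ => hc0 t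
  let Q' := Algebra.adjoin A ((fun t => a • t) '' (T : Set Q))
  have : Module.Finite A Q' := Algebra.finite_adjoin_of_finite_of_isIntegral
    (T.finite_toSet.image _) (by
      rintro _ ⟨t, ht, rfl⟩
      simp only [a]
      rw [← Finset.prod_erase_mul _ _ ht, mul_smul]
      exact (hc t).smul _)
  have hpow := exists_pow_smul_mem hT Q' a fun t ht => Algebra.subset_adjoin ⟨t, ht, rfl⟩
  obtain ⟨k, hk⟩ := hpow β
  obtain ⟨χ, hχ⟩ := exists_functional (A := A) (⟨a ^ k • β, hk⟩ : Q') (by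
    intro b hb h
    have h1 := congrArg Subtype.val h
    change b • a ^ k • β = 0 at h1
    rw [smul_smul] at h1
    exact hβ _ (mul_ne_zero hb (pow_ne_zero _ ha)) h1)
  refine ⟨a * χ ⟨a ^ k • β, hk⟩, mul_ne_zero ha hχ, fun κ _ _ hg h => ?_⟩
  rw [map_mul, mul_ne_zero_iff] at hg
  have hbij := baseChange_bijective Q'.val.toLinearMap Subtype.val_injective a
    (fun y => by
      obtain ⟨k, hk⟩ := hpow y
      exact ⟨k, ⟨_, hk⟩, rfl⟩) κ hg.1
  have h0 : (1 : κ) ⊗ₜ[A] (⟨a ^ k • β, hk⟩ : Q') = 0 := by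
    apply hbij.1
    rw [map_zero, LinearMap.baseChange_tmul]
    change (1 : κ) ⊗ₜ[A] (a ^ k • β) = 0
    rw [tmul_smul, h, smul_zero]
  have h1 := congrArg (LinearMap.liftBaseChange κ ((Algebra.linearMap A κ).comp χ)) h0
  rw [LinearMap.liftBaseChange_tmul, map_zero, one_smul] at h1
  exact hg.2 h1

/-- A nonzero element of a Noetherian domain is not in a high power of a proper ideal, uniformly
over a dense open subset of the base. -/
lemma exists_notMem_pow {A : Type u} {S : Type v} [CommRing A] [IsDomain A] [CommRing S]
    [IsDomain S] [IsNoetherianRing S] [Algebra A S] [Algebra.FiniteType A S]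
    [Module.IsTorsionFree A S] (I : Ideal S) (hI : ∀ a : A, algebraMap A S a ∈ I → a = 0)
    (halg : ∀ y : S, ∃ h : Polynomial A, h ≠ 0 ∧ Polynomial.aeval y h ∈ I) (y : S) (hy : y ≠ 0) :
    ∃ (j : ℕ) (g : A), g ≠ 0 ∧ ∀ (κ : Type w) [Field κ] [Algebra A κ], algebraMap A κ g ≠ 0 →
      (1 : κ) ⊗ₜ[A] y ∉ fiberIdeal (A := A) κ I ^ j := by
  let M := Algebra.algebraMapSubmonoid S (nonZeroDivisors A)
  have hM : M ≤ nonZeroDivisors S := map_le_nonZeroDivisors_of_injective _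
    (FaithfulSMul.algebraMap_injective A S) le_rfl
  let SK := Localization M
  have : IsDomain SK := IsLocalization.isDomain_of_le_nonZeroDivisors SK hM
  have : IsNoetherianRing SK := IsLocalization.isNoetherianRing M SK inferInstance
  have hne : I.map (algebraMap S SK) ≠ ⊤ := by
    rw [IsLocalization.map_algebraMap_ne_top_iff_disjoint M SK, Set.disjoint_left]
    rintro _ ⟨a, ha, rfl⟩ haI
    exact nonZeroDivisors.ne_zero ha (hI a haI)
  have hbot := Ideal.iInf_pow_eq_bot_of_isDomain _ hne
  have hj : ∃ j : ℕ, algebraMap S SK y ∉ I.map (algebraMap S SK) ^ j := by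
    by_contra! h
    have : algebraMap S SK y ∈ ⨅ j, I.map (algebraMap S SK) ^ j := Ideal.mem_iInf.2 h
    rw [hbot, Ideal.mem_bot, map_eq_zero_iff _ (IsLocalization.injective SK hM)] at this
    exact hy this
  obtain ⟨j, hj⟩ := hj
  rw [← Ideal.map_pow, IsLocalization.algebraMap_mem_map_algebraMap_iff M] at hj
  push Not at hj
  obtain ⟨g, hg0, hg⟩ := exists_tmul_ne_zero.{u, v, w} (A := A) (Q := S ⧸ I ^ j) (by
      intro z
      obtain ⟨z, rfl⟩ := Ideal.Quotient.mkₐ_surjective A (I ^ j) z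
      obtain ⟨h, h0, hz⟩ := halg z
      refine ⟨h ^ j, pow_ne_zero _ h0, ?_⟩
      rw [Polynomial.aeval_algHom_apply, map_pow]
      exact Ideal.Quotient.eq_zero_iff_mem.2 (Ideal.pow_mem_pow hz j))
    (Ideal.Quotient.mkₐ A (I ^ j) y) (by
      intro b hb h
      rw [← map_smul, Ideal.Quotient.mkₐ_eq_mk, Ideal.Quotient.eq_zero_iff_mem,
        Algebra.smul_def] at h
      exact hj _ ⟨b, mem_nonZeroDivisors_of_ne_zero hb, rfl⟩ h)
  refine ⟨j, g, hg0, fun κ _ _ hκ hmem => hg κ hκ ?_⟩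
  rw [← Ideal.map_pow] at hmem
  exact fiberIdeal_le_ker le_rfl hmem

/-- An algebra containing a transcendental element is not finite over the base, so its normalization
has at least one variable. -/
lemma NData.pos_of_transcendental {A B : Type*} [CommRing A] [IsDomain A] [CommRing B]
    [Algebra A B] {n r' r : ℕ} (N : NData A B n r' r) {y : B} (hy : Transcendental A y) :
    0 < n := by
  classical
  rcases Nat.eq_zero_or_pos n with rfl | h
  · exfalso
    have : Module.Finite A B := by
      refine ⟨⟨Finset.univ.image N.u, top_le_iff.1 fun z _ => ?_⟩⟩
      obtain ⟨a, rfl⟩ := N.u_spec z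
      refine Submodule.sum_mem _ fun i _ => ?_
      obtain ⟨b, hb⟩ := C_surjective (R := A) (Fin 0) (a i)
      rw [← hb, aeval_C, ← Algebra.smul_def]
      exact Submodule.smul_mem _ _ (Submodule.subset_span (by simp))
    exact hy (Algebra.IsIntegral.isIntegral (R := A) y).isAlgebraic
  · exact h

lemma finite_of_le_ker {κ B C : Type*} [Field κ] [CommRing B] [CommRing C] [Algebra κ B]
    [Algebra κ C] (f : B →ₐ[κ] C) (hf : Function.Surjective f) {I : Ideal B}
    (hI : I ≤ RingHom.ker f) (h : Module.Finite κ (B ⧸ I)) : Module.Finite κ C := by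
  refine Module.Finite.of_surjective (Ideal.Quotient.liftₐ I f fun z hz => hI hz).toLinearMap ?_
  intro z
  obtain ⟨w, rfl⟩ := hf z
  exact ⟨Ideal.Quotient.mk _ w, rfl⟩

lemma map_mkₐ_surjective {A S κ : Type*} [CommRing A] [CommRing S] [Algebra A S]
    [Field κ] [Algebra A κ] (J : Ideal S) :
    Function.Surjective (Algebra.TensorProduct.map (AlgHom.id κ κ) (Ideal.Quotient.mkₐ A J)) := by
  intro z
  induction z with
  | zero => exact ⟨0, map_zero _⟩
  | tmul t y =>
    obtain ⟨y, rfl⟩ := Ideal.Quotient.mkₐ_surjective A J y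
    exact ⟨t ⊗ₜ y, Algebra.TensorProduct.map_tmul _ _ _ _⟩
  | add y z hy hz =>
    obtain ⟨y, rfl⟩ := hy
    obtain ⟨z, rfl⟩ := hz
    exact ⟨y + z, map_add _ _ _⟩

/-- If some element of `S` is transcendental modulo `I`, then almost all fibers of `S ⧸ I` are
infinite-dimensional. -/
lemma exists_not_finite {A : Type u} {S : Type v} [CommRing A] [IsDomain A] [CharZero A]
    [CommRing S] [Algebra A S] [Algebra.FiniteType A S] (I : Ideal S) (y : S)
    (hy : ∀ h : Polynomial A, h ≠ 0 → Polynomial.aeval y h ∉ I) :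
    ∃ g : A, g ≠ 0 ∧ ∀ (κ : Type w) [Field κ] [Algebra A κ], algebraMap A κ g ≠ 0 →
      ∀ I' : Ideal (κ ⊗[A] S), I' ≤ fiberIdeal (A := A) κ I →
        ¬ Module.Finite κ (κ ⊗[A] S ⧸ I') := by
  obtain ⟨J, hJ, hIJ, hdisj⟩ := Ideal.exists_le_prime_disjoint I
    ((nonZeroDivisors (Polynomial A)).map (Polynomial.aeval y : Polynomial A →ₐ[A] S)) (by
      rw [Set.disjoint_right]
      rintro _ ⟨h, h0, rfl⟩
      exact hy h (nonZeroDivisors.ne_zero h0))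
  have htr : Transcendental A (Ideal.Quotient.mkₐ A J y) := by
    rintro ⟨h, h0, hz⟩
    rw [Polynomial.aeval_algHom_apply, Ideal.Quotient.mkₐ_eq_mk,
      Ideal.Quotient.eq_zero_iff_mem] at hz
    exact Set.disjoint_left.1 hdisj hz ⟨h, mem_nonZeroDivisors_of_ne_zero h0, rfl⟩
  have hinj : Function.Injective (algebraMap A (S ⧸ J)) := by
    rw [injective_iff_map_eq_zero]
    intro a ha
    by_contra ha0
    exact htr ⟨Polynomial.C a, by simpa using ha0, by rw [Polynomial.aeval_C, ha]⟩
  have : FaithfulSMul A (S ⧸ J) := (faithfulSMul_iff_algebraMap_injective _ _).2 hinj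
  obtain ⟨a, B, n, r', r, N, ha, hc, -, hr, hpow⟩ := exists_spread A (S ⧸ J)
  have hn : 0 < n := by
    obtain ⟨k, hk⟩ := hpow (Ideal.Quotient.mkₐ A J y)
    have hty : Transcendental A (⟨a ^ k • Ideal.Quotient.mkₐ A J y, hk⟩ : B) := by
      intro halg
      have h1 : IsAlgebraic A (a ^ k • Ideal.Quotient.mkₐ A J y) := halg.algHom B.val
      exact htr (IsAlgebraic.of_smul (mem_nonZeroDivisors_of_ne_zero (pow_ne_zero k ha)) h1)
    exact N.pos_of_transcendental hty
  obtain ⟨e, he⟩ := MvPolynomial.exists_coeff_ne_zero hc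
  obtain ⟨γ, hγ⟩ : ∃ γ, γ = coeff e N.c := ⟨_, rfl⟩
  rw [← hγ] at he
  have hg := mul_ne_zero ha he
  use a * γ
  constructor
  · exact hg
  intro κ _ _ hκ I' hI' hfin
  rw [map_mul, mul_ne_zero_iff] at hκ
  have hbij := baseChange_bijective B.val.toLinearMap Subtype.val_injective a
    (fun y => by
      obtain ⟨k, hk⟩ := hpow y
      exact ⟨k, ⟨_, hk⟩, rfl⟩) κ hκ.1
  have hcκ : (N.baseChange κ).c ≠ 0 := by
    intro h
    have h1 : coeff e (map (algebraMap A κ) N.c) = 0 := by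
      rw [show map (algebraMap A κ) N.c = 0 from h, coeff_zero]
    rw [coeff_map] at h1
    exact hκ.2 (hγ ▸ h1)
  have h1 : Module.Finite κ (κ ⊗[A] (S ⧸ J)) := finite_of_le_ker
    (Algebra.TensorProduct.map (AlgHom.id κ κ) (Ideal.Quotient.mkₐ A J))
    (map_mkₐ_surjective J) (hI'.trans (fiberIdeal_le_ker hIJ)) hfin
  have h2 : Module.Finite κ (κ ⊗[A] B) := Module.Finite.of_injective _ hbij.1
  have h3 : Module.Finite κ (MvPolynomial (Fin n) κ) :=
    Module.Finite.of_injective (aeval (N.baseChange κ).x).toLinearMap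
      ((N.baseChange κ).aeval_injective hcκ hr)
  exact MvPolynomial.transcendental_X κ (⟨0, hn⟩ : Fin n)
    (Algebra.IsIntegral.isIntegral (R := κ) _).isAlgebraic

end SpreadHK

namespace SpreadHK

open MvPolynomial TensorProduct

universe u v w

/-! ### Transport between fibers -/

section Transport

variable {A S S' : Type*} [CommRing A] [CommRing S] [CommRing S'] [Algebra A S] [Algebra A S']
  (ψ : S' →ₐ[A] S) (κ : Type*) [Field κ] [Algebra A κ]

/-- The isomorphism of fibers induced by an inclusion of algebras which is an isomorphism after
inverting `a`, if `a` is invertible in `κ`. -/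
noncomputable def fiberEquiv (hψ : Function.Injective ψ) (a : A)
    (ha : ∀ y, ∃ (k : ℕ) (s : S'), ψ s = a ^ k • y) (haκ : algebraMap A κ a ≠ 0) :
    κ ⊗[A] S' ≃ₐ[κ] κ ⊗[A] S :=
  AlgEquiv.ofBijective (Algebra.TensorProduct.map (AlgHom.id κ κ) ψ)
    (baseChange_bijective ψ.toLinearMap hψ a ha κ haκ)

variable {ψ κ}

lemma fiberEquiv_tmul (hψ : Function.Injective ψ) {a : A}
    (ha : ∀ y, ∃ (k : ℕ) (s : S'), ψ s = a ^ k • y) (haκ : algebraMap A κ a ≠ 0) (t : κ) (s : S') :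
    fiberEquiv ψ κ hψ a ha haκ (t ⊗ₜ s) = t ⊗ₜ ψ s := rfl

lemma fiberIdeal_comap_map (hψ : Function.Injective ψ) {a : A}
    (ha : ∀ y, ∃ (k : ℕ) (s : S'), ψ s = a ^ k • y) (haκ : algebraMap A κ a ≠ 0) (I : Ideal S) :
    (fiberIdeal (A := A) κ (I.comap ψ)).map
      ((fiberEquiv ψ κ hψ a ha haκ).toRingEquiv : κ ⊗[A] S' →+* κ ⊗[A] S) =
      fiberIdeal (A := A) κ I := by
  apply le_antisymm
  · rw [Ideal.map_map, Ideal.map_le_iff_le_comap]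
    intro s hs
    exact one_tmul_mem_fiberIdeal (κ := κ) (I := I) hs
  · rw [Ideal.map_le_iff_le_comap]
    intro y hy
    obtain ⟨k, s, hs⟩ := ha y
    have hsI : s ∈ I.comap ψ := by
      rw [Ideal.mem_comap, hs, Algebra.smul_def]
      exact I.mul_mem_left _ hy
    have h1 := Ideal.mem_map_of_mem
      ((fiberEquiv ψ κ hψ a ha haκ).toRingEquiv : κ ⊗[A] S' →+* κ ⊗[A] S)
      (one_tmul_mem_fiberIdeal (A := A) (κ := κ) hsI)
    have h2 := Ideal.mul_mem_left _ (((algebraMap A κ a ^ k)⁻¹ : κ) ⊗ₜ[A] (1 : S)) h1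
    have h3 : ((algebraMap A κ a ^ k)⁻¹ : κ) ⊗ₜ[A] (1 : S) * (1 : κ) ⊗ₜ[A] ψ s =
        (1 : κ) ⊗ₜ[A] y := by
      rw [Algebra.TensorProduct.tmul_mul_tmul, hs, one_mul, mul_one, ← TensorProduct.smul_tmul,
        Algebra.smul_def, map_pow, mul_inv_cancel₀ (pow_ne_zero k haκ)]
    rw [Ideal.mem_comap]
    convert h2 using 1
    exact h3.symm

lemma finrank_fiber_eq (hψ : Function.Injective ψ) {a : A}
    (ha : ∀ y, ∃ (k : ℕ) (s : S'), ψ s = a ^ k • y) (haκ : algebraMap A κ a ≠ 0) (I : Ideal S)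
    (q : ℕ) :
    Module.finrank κ (κ ⊗[A] S ⧸ (fiberIdeal (A := A) κ I).frobeniusPower q) =
      Module.finrank κ (κ ⊗[A] S' ⧸ (fiberIdeal (A := A) κ (I.comap ψ)).frobeniusPower q) := by
  have h := frobeniusPower_map_equiv (fiberEquiv ψ κ hψ a ha haκ).toRingEquiv
    (fiberIdeal (A := A) κ (I.comap ψ)) q
  rw [fiberIdeal_comap_map hψ ha haκ I] at h
  exact (Ideal.quotientEquivAlg _ _ (fiberEquiv ψ κ hψ a ha haκ) h.symm).symm.toLinearEquiv.finrank_eq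

end Transport

/-! ### The uniform estimate -/

lemma exists_coeff_ne_zero {A : Type u} [CommRing A] {n : ℕ} {P : MvPolynomial (Fin n) A}
    (hP : P ≠ 0) : ∃ g : A, g ≠ 0 ∧ ∀ (κ : Type w) [Field κ] [Algebra A κ],
      algebraMap A κ g ≠ 0 → map (algebraMap A κ) P ≠ 0 := by
  obtain ⟨s, hs⟩ := MvPolynomial.ne_zero_iff.1 hP
  refine ⟨coeff s P, hs, fun κ _ _ h h0 => h ?_⟩
  rw [← coeff_map, h0, coeff_zero]

/-- The uniform estimate in the case that the generic fiber of `I` has finite colength. -/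
lemma exists_bound_of_algebraic {A : Type u} {S : Type v} [CommRing A] [IsDomain A] [CharZero A]
    [CommRing S] [IsDomain S] [IsNoetherianRing S] [Algebra A S] [Module.IsTorsionFree A S]
    [Algebra.FiniteType A S] (I : Ideal S) (hI : ∀ a : A, algebraMap A S a ∈ I → a = 0)
    (halg : ∀ y : S, ∃ h : Polynomial A, h ≠ 0 ∧ Polynomial.aeval y h ∈ I) :
    ∃ (g : A) (C : ℕ), g ≠ 0 ∧ ∀ (κ : Type w) [Field κ] [Algebra A κ] (p : ℕ) [ExpChar κ p]
      [PerfectRing κ p] (dim m : ℕ) (L : ℝ), 2 ≤ p → algebraMap A κ g ≠ 0 → 1 ≤ m →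
      Tendsto (fun k : ℕ => (Module.finrank κ
        (κ ⊗[A] S ⧸ (fiberIdeal (A := A) κ I).frobeniusPower (p ^ k)) : ℝ) / (p : ℝ) ^ (k * dim))
        atTop (nhds L) →
      |(Module.finrank κ (κ ⊗[A] S ⧸ (fiberIdeal (A := A) κ I).frobeniusPower (p ^ m)) : ℝ) /
        (p : ℝ) ^ (m * dim) - L| ≤ C / p := by
  classical
  obtain ⟨a, S', n, r', r, N, ha0, hc, hD, hr, hS'⟩ := exists_spread A S
  choose h h0 hhI using fun i => halg (S'.val (N.x i))
  have hψ : Function.Injective S'.val := Subtype.val_injective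
  have haS : ∀ y, ∃ (k : ℕ) (s : S'), S'.val s = a ^ k • y := fun y => by
    obtain ⟨k, hk⟩ := hS' y
    exact ⟨k, ⟨_, hk⟩, rfl⟩
  have hbad : N.badPoly ≠ 0 := mul_ne_zero hc (mul_ne_zero (pow_ne_zero _ hc) hD)
  have hE : S'.val (aeval N.x N.badPoly) ≠ 0 := by
    rw [Ne, map_eq_zero_iff _ hψ, map_eq_zero_iff _ (N.aeval_injective hc hr)]
    exact hbad
  obtain ⟨j, g₁, hg₁, hj⟩ := exists_notMem_pow.{u, v, w} I hI halg _ hE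
  obtain ⟨g₂, hg₂, hcκ⟩ := exists_coeff_ne_zero.{u, w} hc
  obtain ⟨g₃, hg₃, hDκ⟩ := exists_coeff_ne_zero.{u, w} hD
  let d := (Finset.univ.sup fun i => (h i).natDegree) + 1
  let g₄ : A := ∏ i, (h i).leadingCoeff
  have hg₄ : g₄ ≠ 0 := Finset.prod_ne_zero_iff.2 fun i _ => Polynomial.leadingCoeff_ne_zero.2 (h0 i)
  refine ⟨a * g₁ * g₂ * g₃ * g₄, NData.convConst n r' d N.badPoly.totalDegree, by
    simp [ha0, hg₁, hg₂, hg₃, hg₄], ?_⟩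
  intro κ _ _ p _ _ dim m L hp hg hm hL
  simp only [map_mul, mul_ne_zero_iff] at hg
  obtain ⟨⟨⟨⟨haκ, hg₁κ⟩, hg₂κ⟩, hg₃κ⟩, hg₄κ⟩ := hg
  specialize hj κ hg₁κ
  have hD' : (N.baseChange κ).D ≠ 0 := by rw [NData.baseChange_D]; exact hDκ κ hg₃κ
  have hc' : (N.baseChange κ).c ≠ 0 := hcκ κ hg₂κ
  have : Nontrivial (κ ⊗[A] S') :=
    ((N.baseChange κ).aeval_injective hc' hr).nontrivial
  have : ExpChar (κ ⊗[A] S') p :=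
    expChar_of_injective_algebraMap (algebraMap κ (κ ⊗[A] S')).injective p
  simp only [finrank_fiber_eq hψ haS haκ I] at hL ⊢
  have hnat : ∀ i, ((h i).map (algebraMap A κ)).natDegree ≤ d := fun i =>
    (Polynomial.natDegree_map_le).trans
      ((Finset.le_sup (f := fun i => (h i).natDegree) (Finset.mem_univ i)).trans (Nat.le_succ _))
  have hne : ∀ i, (h i).map (algebraMap A κ) ≠ 0 := fun i hi => by
    apply hg₄κ
    rw [map_prod]
    refine Finset.prod_eq_zero (Finset.mem_univ i) ?_
    rw [Polynomial.leadingCoeff, ← Polynomial.coeff_map, hi, Polynomial.coeff_zero]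
  have hmem : ∀ i, Polynomial.aeval ((N.baseChange κ).x i) ((h i).map (algebraMap A κ)) ∈
      fiberIdeal (A := A) κ (I.comap S'.val) := fun i => by
    have h1 : Polynomial.aeval (N.x i) (h i) ∈ I.comap S'.val := by
      rw [Ideal.mem_comap]
      have := hhI i
      rwa [Polynomial.aeval_algHom_apply] at this
    have h2 := one_tmul_mem_fiberIdeal (A := A) (κ := κ) h1
    rw [Polynomial.aeval_map_algebraMap]
    have h3 := Polynomial.aeval_algHom_apply
      (Algebra.TensorProduct.includeRight : S' →ₐ[A] κ ⊗[A] S') (N.x i) (h i)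
    change Polynomial.aeval ((Algebra.TensorProduct.includeRight : S' →ₐ[A] κ ⊗[A] S') (N.x i)) _ ∈ _
    rw [h3]
    exact h2
  have hjj : aeval (N.baseChange κ).x (N.baseChange κ).bad ∉
      fiberIdeal (A := A) κ (I.comap S'.val) ^ j := by
    intro hmem
    apply hj
    rw [NData.baseChange_bad] at hmem
    have h1 : aeval (N.baseChange κ).x (map (algebraMap A κ) N.badPoly) =
      (1 : κ) ⊗ₜ[A] aeval N.x N.badPoly := aeval_one_tmul κ N.x N.badPoly
    rw [h1] at hmem
    have h2 := Ideal.mem_map_of_mem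
      ((fiberEquiv S'.val κ hψ a haS haκ).toRingEquiv : κ ⊗[A] S' →+* κ ⊗[A] S) hmem
    rw [Ideal.map_pow, fiberIdeal_comap_map hψ haS haκ I] at h2
    exact h2
  have hδ : (N.baseChange κ).bad.totalDegree ≤ N.badPoly.totalDegree := by
    rw [NData.baseChange_bad]
    exact Finset.sup_mono (support_map_subset _ _)
  exact (N.baseChange κ).abs_sub_le p hp hc' hD' (fiberIdeal (A := A) κ (I.comap S'.val))
    (fun i => (h i).map (algebraMap A κ)) hne hmem (Nat.succ_pos _) hnat hδ hjj dim m hm L hL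

/-- In the fibers over a dense open subset, the normalized colengths approximate their limit with
an error `C / p`, where `C` does not depend on the fiber. -/
lemma exists_bound {A : Type u} {S : Type v} [CommRing A] [IsDomain A] [CharZero A]
    [CommRing S] [IsDomain S] [IsNoetherianRing S] [Algebra A S] [Module.IsTorsionFree A S]
    [Algebra.FiniteType A S] (I : Ideal S) (hI : ∀ a : A, algebraMap A S a ∈ I → a = 0) :
    ∃ (g : A) (C : ℕ), g ≠ 0 ∧ ∀ (κ : Type w) [Field κ] [Algebra A κ] (p : ℕ) [ExpChar κ p]
      [PerfectRing κ p] (dim m : ℕ) (L : ℝ), 2 ≤ p → algebraMap A κ g ≠ 0 → 1 ≤ m →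
      Tendsto (fun k : ℕ => (Module.finrank κ
        (κ ⊗[A] S ⧸ (fiberIdeal (A := A) κ I).frobeniusPower (p ^ k)) : ℝ) / (p : ℝ) ^ (k * dim))
        atTop (nhds L) →
      |(Module.finrank κ (κ ⊗[A] S ⧸ (fiberIdeal (A := A) κ I).frobeniusPower (p ^ m)) : ℝ) /
        (p : ℝ) ^ (m * dim) - L| ≤ C / p := by
  by_cases halg : ∀ y : S, ∃ h : Polynomial A, h ≠ 0 ∧ Polynomial.aeval y h ∈ I
  · exact exists_bound_of_algebraic I hI halg
  · push Not at halg
    obtain ⟨y, hy⟩ := halg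
    obtain ⟨g, hg, hfin⟩ := exists_not_finite.{u, v, w} I y hy
    refine ⟨g, 0, hg, fun κ _ _ p _ _ dim m L hp hgκ _ hL => ?_⟩
    -- all colengths are infinite, so their `finrank` vanishes
    have hz : ∀ k, Module.finrank κ
        (κ ⊗[A] S ⧸ (fiberIdeal (A := A) κ I).frobeniusPower (p ^ k)) = 0 := fun k =>
      Module.finrank_of_not_finite (hfin κ hgκ _
        (frobeniusPower_le_self _ (pow_ne_zero k (by omega))))
    simp only [hz, Nat.cast_zero, zero_div] at hL ⊢
    rw [tendsto_nhds_unique hL tendsto_const_nhds]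
    simp

end SpreadHK

theorem spread_fiber_colength_tendsto_eHK
    {k R : Type*} [Field k] [IsAlgClosed k] [CharZero k]
    [CommRing R] [IsDomain R] [IsNoetherianRing R] [Algebra k R]
    (𝒜 : ℕ → Submodule k R) [GradedAlgebra 𝒜]
    -- `R` is standard graded: `R₀ = k` and `R` is generated over `k` in degree 1
    (h0 : 𝒜 0 = Submodule.span k {1})
    (hgen : Algebra.adjoin k (𝒜 1 : Set R) = ⊤)
    (d : ℕ) (hd : 2 ≤ d) (hdim : ringKrullDim R = d)
    (I : Ideal R) (hIhom : I.IsHomogeneous 𝒜) (hIne : I ≠ ⊤)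
    (hIfin : FiniteDimensional k (R ⧸ I))
    -- the spread `(A, R_A, I_A)`: `A ⊆ k` a finitely generated `ℤ`-algebra,
    -- `R_A = S` a finitely generated graded `A`-subalgebra of `R` with
    -- `R = R_A ⊗_A k`, and `I_A ⊆ R_A` a homogeneous ideal with `I = I_A ⊗_A k`
    (A : Type*) [CommRing A] [IsDomain A] [Algebra A k]
    (hAk : Function.Injective (algebraMap A k)) (hAfg : Algebra.FiniteType ℤ A)
    [Algebra A R] [IsScalarTower A k R]
    (S : Subalgebra A R) (hSfg : Algebra.FiniteType A S)
    (hSspan : Submodule.span k (S : Set R) = ⊤)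
    (hSgraded : ∀ m : ℕ, 𝒜 m = Submodule.span k ((S : Set R) ∩ (𝒜 m : Set R)))
    (I_A : Ideal S)
    (hIA : Submodule.span k (Subtype.val '' (I_A : Set S)) =
      Submodule.restrictScalars k I)
    (hIAhom : Ideal.span {x : S | x ∈ I_A ∧ ∃ m, (x : R) ∈ 𝒜 m} = I_A)
    (m : ℕ) (hm : d - 1 ≤ m) :
    ∀ ε : ℝ, 0 < ε → ∃ g : A, g ≠ 0 ∧
      ∀ (𝔪 : Ideal A) (h𝔪 : 𝔪.IsMaximal), g ∉ 𝔪 →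
        -- `eHK` is the Hilbert–Kunz multiplicity `e_HK(R_s, I_s)` of the fiber
        ∀ eHK : ℝ,
          Tendsto
            (fun n : ℕ =>
              (spreadFiberColength S I_A 𝔪 h𝔪 ((ringChar (A ⧸ 𝔪)) ^ n) : ℝ) /
                (ringChar (A ⧸ 𝔪) : ℝ) ^ (n * d))
            atTop (nhds eHK) →
          |(spreadFiberColength S I_A 𝔪 h𝔪 ((ringChar (A ⧸ 𝔪)) ^ m) : ℝ) /
                (ringChar (A ⧸ 𝔪) : ℝ) ^ (m * d) -
              eHK| < ε := by
  intro ε hε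
  have hAR : Function.Injective (algebraMap A R) := by
    rw [IsScalarTower.algebraMap_eq A k R]
    exact (algebraMap k R).injective.comp hAk
  have : CharZero A := (algebraMap A k).charZero
  have : FaithfulSMul A R := (faithfulSMul_iff_algebraMap_injective A R).2 hAR
  have : IsNoetherianRing A := Algebra.FiniteType.isNoetherianRing ℤ A
  have : IsNoetherianRing S := Algebra.FiniteType.isNoetherianRing A S
  have hAS : Function.Injective (algebraMap A S) := fun x y hxy =>
    hAR (congrArg Subtype.val hxy)
  have : FaithfulSMul A S := (faithfulSMul_iff_algebraMap_injective A S).2 hAS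
  have : Module.IsTorsionFree A S := .trans_faithfulSMul A S S
  have hI : ∀ a : A, algebraMap A S a ∈ I_A → a = 0 := by
    intro a ha
    by_contra ha0
    apply hIne
    have h1 : algebraMap k R (algebraMap A k a) ∈ I := by
      rw [← IsScalarTower.algebraMap_apply]
      have : algebraMap A R a ∈ Submodule.restrictScalars k I := by
        rw [← hIA]
        exact Submodule.subset_span ⟨_, ha, rfl⟩
      exact this
    refine Ideal.eq_top_of_isUnit_mem _ h1 (IsUnit.map _ (isUnit_iff_ne_zero.2 ?_))
    rwa [Ne, map_eq_zero_iff _ hAk]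
  obtain ⟨g, C, hg, hbound⟩ := SpreadHK.exists_bound I_A hI
  obtain ⟨B, hB⟩ := exists_nat_gt (C / ε)
  refine ⟨g * (B.factorial : A), mul_ne_zero hg (Nat.cast_ne_zero.2 B.factorial_ne_zero), ?_⟩
  intro 𝔪 h𝔪 hg𝔪 eHK hL
  let : Field (A ⧸ 𝔪) := Ideal.Quotient.field 𝔪
  have hmd : m * d ≠ 0 := mul_ne_zero (by omega) (by omega)
  obtain hp0 | hpp := CharP.char_is_prime_or_zero (A ⧸ 𝔪) (ringChar (A ⧸ 𝔪)) |>.symm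
  · -- residue characteristic zero: all denominators are zero
    rw [hp0] at hL ⊢
    have : eHK = 0 := by
      refine tendsto_nhds_unique hL (tendsto_const_nhds.congr' ?_)
      filter_upwards [eventually_ge_atTop 1] with n hn
      rw [Nat.cast_zero, zero_pow (mul_ne_zero (by omega) (by omega)), div_zero]
    rw [this, Nat.cast_zero, zero_pow hmd]
    simpa using hε
  · set p := ringChar (A ⧸ 𝔪) with hp
    have : Fact p.Prime := ⟨hpp⟩
    have : CharP (AlgebraicClosure (A ⧸ 𝔪)) p :=
      charP_of_injective_algebraMap (algebraMap (A ⧸ 𝔪) _).injective p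
    have : ExpChar (AlgebraicClosure (A ⧸ 𝔪)) p := ExpChar.prime hpp
    have hz : ∀ x : A, algebraMap A (AlgebraicClosure (A ⧸ 𝔪)) x = 0 → x ∈ 𝔪 := by
      intro x hx
      rw [IsScalarTower.algebraMap_apply A (A ⧸ 𝔪), map_eq_zero] at hx
      exact Ideal.Quotient.eq_zero_iff_mem.1 hx
    have hpB : B < p := by
      by_contra! hle
      apply hg𝔪
      apply Ideal.mul_mem_left
      rw [← Ideal.Quotient.eq_zero_iff_mem, map_natCast, CharP.cast_eq_zero_iff _ p]
      exact Nat.dvd_factorial hpp.pos hle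
    have h := hbound (AlgebraicClosure (A ⧸ 𝔪)) p d m eHK hpp.two_le
      (fun h0 => hg𝔪 (Ideal.mul_mem_right _ _ (hz g h0))) (by omega) hL
    refine lt_of_le_of_lt h ?_
    have hp' : (B : ℝ) < p := by exact_mod_cast hpB
    rw [div_lt_iff₀ (by exact_mod_cast hpp.pos)]
    rw [div_lt_iff₀ hε] at hB
    nlinarith
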